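/- arXiv:1805.08135 — 5 statements merged into one kernel-verified Lean document; each statement's English description precedes it below -/
import Mathlib

section
/- Let n ≥ 2 be an integer and 0 < λ ≤ Λ real constants. There exist constants M > 1 and σ ∈ (0,1), depending only on n, λ and Λ, such that for every open set Ω ⊆ ℝⁿ containing the closed ball of radius 2√n centered at 0, and every continuous function v : Ω → ℝ that is a viscosity supersolution of M⁻_{λ,Λ}(D²v) ≤ 0 in Ω with G⁻₁(v,Ω) ∩ Q₃ ≠ ∅, one has |G⁻_M(v,Ω) ∩ Q₁| ≥ 1 − σ. -/
open MeasureTheory Metric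
open scoped InnerProductSpace ENNReal

noncomputable section

abbrev Euc (n : ℕ) := EuclideanSpace ℝ (Fin n)

/-- Loewner order -/
def matLE {n : ℕ} (A B : Matrix (Fin n) (Fin n) ℝ) : Prop := (B - A).PosSemidef

/-- Pucci minimal operator -/
def pucciInf {n : ℕ} (lam Lam : ℝ) (M : Matrix (Fin n) (Fin n) ℝ) : ℝ :=
  sInf {t : ℝ | ∃ A : Matrix (Fin n) (Fin n) ℝ,
    A.IsSymm ∧ matLE (lam • 1) A ∧ matLE A (Lam • 1) ∧ t = (A * M).trace}

/-- Hessian matrix via second iterated Fréchet derivative -/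
def hessianMatrix {n : ℕ} (φ : Euc n → ℝ) (x : Euc n) : Matrix (Fin n) (Fin n) ℝ :=
  Matrix.of fun i j =>
    iteratedFDeriv ℝ 2 φ x ![EuclideanSpace.single i 1, EuclideanSpace.single j 1]

/-- viscosity supersolution of M⁻(D²v) ≤ 0 -/
def ViscSupersol {n : ℕ} (lam Lam : ℝ) (Ω : Set (Euc n)) (v : Euc n → ℝ) : Prop :=
  ∀ x₀ ∈ Ω, ∀ φ : Euc n → ℝ,
    (∃ U : Set (Euc n), IsOpen U ∧ x₀ ∈ U ∧ ContDiffOn ℝ 2 φ U) →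
    IsLocalMinOn (fun x => v x - φ x) Ω x₀ →
    pucciInf lam Lam (hessianMatrix φ x₀) ≤ 0

def Gm {n : ℕ} (K : ℝ) (v : Euc n → ℝ) (Ω : Set (Euc n)) : Set (Euc n) :=
  {xb | xb ∈ Ω ∧ ∃ p : Euc n, ∀ x ∈ Ω, v x ≥ v xb + ⟪p, x - xb⟫_ℝ - K / 2 * ‖x - xb‖ ^ 2}

def Am {n : ℕ} (K : ℝ) (v : Euc n → ℝ) (Ω : Set (Euc n)) : Set (Euc n) := Ω \ Gm K v Ω

/-- open cube of side r centered at x -/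
def cube {n : ℕ} (r : ℝ) (x : Euc n) : Set (Euc n) := {y | ∀ i, |y i - x i| < r / 2}


/-! ### Hessians and the Pucci operator -/

lemma hess_of_grad {n : ℕ} (φ : Euc n → ℝ) (g : Euc n → Euc n) (G : Euc n →L[ℝ] Euc n) (x : Euc n)
    (h1 : ∀ y, HasFDerivAt φ (innerSL ℝ (g y)) y) (h2 : HasFDerivAt g G x) (i j : Fin n) :
    hessianMatrix φ x i j = ⟪G (EuclideanSpace.single i 1), EuclideanSpace.single j 1⟫_ℝ := by
  have e : fderiv ℝ φ = fun y => innerSL ℝ (g y) := funext fun y => (h1 y).fderiv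
  have h3 : HasFDerivAt (fun y => innerSL ℝ (g y)) ((innerSL ℝ : Euc n →L[ℝ] _).comp G) x :=
    (innerSL ℝ : Euc n →L[ℝ] _).hasFDerivAt.comp x h2
  simp only [hessianMatrix, Matrix.of_apply, iteratedFDeriv_two_apply, e, h3.fderiv]
  simp

lemma pucci_pos {n : ℕ} (lam Lam : ℝ) (hlam : 0 < lam) (hLam : lam ≤ Lam) (a b : ℝ) (ha : 0 ≤ a)
    (hb : 0 ≤ b) (e : Euc n) (H : Matrix (Fin n) (Fin n) ℝ)
    (hH : ∀ i j, H i j = a * e i * e j - b * (if i = j then 1 else 0))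
    (hab : n * Lam * b < lam * a * ‖e‖ ^ 2) : 0 < pucciInf lam Lam H := by
  have key : lam * a * ‖e‖ ^ 2 - n * Lam * b ≤ pucciInf lam Lam H := by
    unfold pucciInf
    apply le_csInf
    · refine ⟨_, lam • 1, ?_, ?_, ?_, rfl⟩
      · simp [Matrix.IsSymm]
      · simp only [matLE, sub_self]; exact Matrix.PosSemidef.zero
      · simp only [matLE, ← sub_smul]
        exact Matrix.PosSemidef.one.smul (by linarith)
    · rintro t ⟨A, hA, h1, h2, rfl⟩
      have hHe : H = a • Matrix.vecMulVec e.ofLp e.ofLp - b • 1 := by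
        ext i j
        simp [hH, Matrix.vecMulVec_apply, Matrix.one_apply]
        ring
      have hn : ‖e‖ ^ 2 = e.ofLp ⬝ᵥ e.ofLp := by
        rw [EuclideanSpace.real_norm_sq_eq]
        simp [dotProduct, sq]
      have h3 : lam * ‖e‖ ^ 2 ≤ e.ofLp ⬝ᵥ (A.mulVec e.ofLp) := by
        have := h1.dotProduct_mulVec_nonneg e.ofLp
        simp [Matrix.sub_mulVec, Matrix.smul_mulVec] at this
        rw [hn]; linarith
      have h4 : A.trace ≤ n * Lam := by
        have := h2.trace_nonneg
        simp [Matrix.trace_sub, Matrix.trace_smul] at this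
        linarith
      have h5 : (A * H).trace = a * (e.ofLp ⬝ᵥ (A.mulVec e.ofLp)) - b * A.trace := by
        rw [hHe, Matrix.mul_sub, Matrix.trace_sub]
        simp [Matrix.mul_vecMulVec, Matrix.trace_vecMulVec, dotProduct_comm]
      rw [h5]
      nlinarith [mul_le_mul_of_nonneg_left h3 ha, mul_le_mul_of_nonneg_left h4 hb]
  linarith

/-- Test function principle. -/
lemma no_touch {n : ℕ} (lam Lam : ℝ) (hlam : 0 < lam) (hLam : lam ≤ Lam) (Ω : Set (Euc n))
    (v : Euc n → ℝ) (hv : ViscSupersol lam Lam Ω v) (φ : Euc n → ℝ) (g : Euc n → Euc n)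
    (G : Euc n →L[ℝ] Euc n) (x : Euc n) (hx : x ∈ Ω) (hφ : ContDiff ℝ 2 φ)
    (h1 : ∀ y, HasFDerivAt φ (innerSL ℝ (g y)) y) (h2 : HasFDerivAt g G x)
    (a b : ℝ) (ha : 0 ≤ a) (hb : 0 ≤ b) (e : Euc n)
    (hG : ∀ u, G u = (a * ⟪e, u⟫_ℝ) • e - b • u)
    (hab : n * Lam * b < lam * a * ‖e‖ ^ 2)
    (hmin : IsLocalMin (fun x => v x - φ x) x) : False := by
  have h := hv x hx φ ⟨Set.univ, isOpen_univ, trivial, hφ.contDiffOn⟩ (hmin.on Ω)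
  have := pucci_pos lam Lam hlam hLam a b ha hb e (hessianMatrix φ x) (by
    intro i j
    rw [hess_of_grad φ g G x h1 h2, hG]
    simp [inner_sub_left, inner_smul_left, EuclideanSpace.inner_single_right,
      EuclideanSpace.inner_single_left, eq_comm]
    ) hab
  linarith

/-! ### Quadratic test function: Lipschitz estimate on contact points -/

lemma quad_deriv {n : ℕ} (x₁ p e : Euc n) (r α c : ℝ) :
    let φ : Euc n → ℝ := fun x => ⟪p, x - x₁⟫_ℝ - c * ‖x - x₁‖ ^ 2 + α * (⟪e, x - x₁⟫_ℝ + 2 * r) ^ 2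
    let g : Euc n → Euc n := fun x => p - (2 * c) • (x - x₁) + (2 * α * (⟪e, x - x₁⟫_ℝ + 2 * r)) • e
    let G : Euc n →L[ℝ] Euc n :=
      -((2 * c) • ContinuousLinearMap.id ℝ (Euc n)) + ((2 * α) • innerSL ℝ e).smulRight e
    ContDiff ℝ 2 φ ∧ (∀ y, HasFDerivAt φ (innerSL ℝ (g y)) y) ∧ ∀ y, HasFDerivAt g G y := by
  intro φ g G
  have hi : ∀ (q y : Euc n), HasFDerivAt (fun x : Euc n => ⟪q, x - x₁⟫_ℝ) (innerSL ℝ q) y := by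
    intro q y
    exact (innerSL ℝ q).hasFDerivAt.comp y ((hasFDerivAt_id y).sub_const x₁)
  have hid : ∀ y : Euc n, HasFDerivAt (fun x : Euc n => x - x₁) (ContinuousLinearMap.id ℝ (Euc n)) y :=
    fun y => (hasFDerivAt_id y).sub_const x₁
  refine ⟨?_, ?_, ?_⟩
  · refine ((ContDiff.inner ℝ contDiff_const (contDiff_id.sub contDiff_const)).sub
      (contDiff_const.mul ((contDiff_id.sub contDiff_const).norm_sq ℝ))).add
      (contDiff_const.mul (((ContDiff.inner ℝ contDiff_const
        (contDiff_id.sub contDiff_const)).add contDiff_const).pow 2))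
  · intro y
    have := ((hi p y).sub ((hid y).norm_sq.const_mul c)).add
      ((((hi e y).add_const (2 * r)).pow 2).const_mul α)
    refine this.congr_fderiv ?_
    ext u
    simp [g, inner_add_left, inner_sub_left, inner_smul_left]
    ring
  · intro y
    have := (((hid y).const_smul (2 * c)).const_sub p).add
      ((((hi e y).add_const (2 * r)).const_mul (2 * α)).smul_const e)
    exact this

lemma lip_contact {n : ℕ} (hn : 2 ≤ n) (lam Lam : ℝ) (hlam : 0 < lam) (hLam : lam ≤ Lam)
    (Ω : Set (Euc n)) (v : Euc n → ℝ) (hc : ContinuousOn v Ω)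
    (hv : ViscSupersol lam Lam Ω v) (M : ℝ) (hM : 0 ≤ M) (x₁ x₂ p₁ p₂ : Euc n) (hx₁ : x₁ ∈ Ω)
    (hx₂ : x₂ ∈ Ω)
    (h₁ : ∀ x ∈ Ω, v x ≥ v x₁ + ⟪p₁, x - x₁⟫_ℝ - M / 2 * ‖x - x₁‖ ^ 2)
    (h₂ : ∀ x ∈ Ω, v x ≥ v x₂ + ⟪p₂, x - x₂⟫_ℝ - M / 2 * ‖x - x₂‖ ^ 2)
    (r : ℝ) (hr : 0 < r) (hxr : ‖x₂ - x₁‖ ≤ r)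
    (hball : closedBall x₁ (8 * (n * Lam / lam) * r) ⊆ Ω) :
    ‖p₂ + M • x₂ - (p₁ + M • x₁)‖ ≤ 16 * (n * Lam / lam) * M * r := by
  by_contra! hcon
  set κ : ℝ := n * Lam / lam with hκ
  have hn' : (2 : ℝ) ≤ n := by exact_mod_cast hn
  have hκ2 : 2 ≤ κ := by
    rw [hκ, le_div_iff₀ hlam]; nlinarith
  have hκl : n * Lam = κ * lam := by rw [hκ]; field_simp
  set q := p₂ + M • x₂ - (p₁ + M • x₁) with hq
  have hq0 : 0 < ‖q‖ := lt_of_le_of_lt (by positivity) hcon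
  set e : Euc n := ‖q‖⁻¹ • q with he
  have he1 : ‖e‖ = 1 := by
    rw [he, norm_smul, norm_inv, norm_norm, inv_mul_cancel₀ hq0.ne']
  have hqe : q = ‖q‖ • e := by rw [he, smul_smul, mul_inv_cancel₀ hq0.ne', one_smul]
  set α : ℝ := ‖q‖ / (16 * r) with hα
  have hα0 : 0 < α := by positivity
  have hαq : ‖q‖ = 16 * r * α := by rw [hα]; field_simp
  have hακ : κ * M < α := by
    rw [hαq] at hcon
    have : (16 * r) * (κ * M) < (16 * r) * α := by linarith
    exact lt_of_mul_lt_mul_left this (by positivity)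
  set β : ℝ := α / (2 * κ) with hβ
  have hβ0 : 0 < β := by positivity
  have hβκ : 2 * κ * β = α := by rw [hβ]; field_simp
  obtain ⟨d0, d1, d2⟩ := quad_deriv x₁ p₁ e r α (M / 2 + β)
  set φ : Euc n → ℝ := fun x => ⟪p₁, x - x₁⟫_ℝ - (M / 2 + β) * ‖x - x₁‖ ^ 2 +
    α * (⟪e, x - x₁⟫_ℝ + 2 * r) ^ 2 with hφ
  set N : ℝ := 8 * κ with hN
  have hN0 : 0 < N := by positivity
  let S : Set (Euc n) := closedBall x₁ (N * r) ∩ {x | |⟪e, x - x₁⟫_ℝ| ≤ 2 * r}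
  have hci : Continuous fun x : Euc n => |⟪e, x - x₁⟫_ℝ| := by fun_prop
  have hS : IsCompact S :=
    (isCompact_closedBall _ _).inter_right (isClosed_le hci continuous_const)
  have hSΩ : S ⊆ Ω := fun x hx => hball hx.1
  have hx₁S : x₁ ∈ S := by
    refine ⟨mem_closedBall_self (by positivity), ?_⟩
    simp; positivity
  obtain ⟨z, hzS, hz⟩ := hS.exists_isMinOn (f := fun x => v x - φ x) ⟨x₁, hx₁S⟩
    ((hc.mono hSΩ).sub d0.continuous.continuousOn)
  have hzΩ := hSΩ hzS
  have hDz : v z - φ z ≤ v x₁ - 4 * α * r ^ 2 := by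
    have h := hz hx₁S
    have h0 : φ x₁ = 4 * α * r ^ 2 := by simp [hφ]; ring
    simp only [Set.mem_ofPred_eq, h0] at h
    exact h
  have hpos : 0 < 4 * α * r ^ 2 := by positivity
  have hz1 := h₁ z hzΩ
  have hφz : φ z = ⟪p₁, z - x₁⟫_ℝ - (M / 2 + β) * ‖z - x₁‖ ^ 2 +
    α * (⟪e, z - x₁⟫_ℝ + 2 * r) ^ 2 := rfl
  have hzS2 : |⟪e, z - x₁⟫_ℝ| ≤ 2 * r := by
    have := hzS.2
    rwa [Set.mem_ofPred_eq] at this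
  obtain ⟨hl, hu⟩ := abs_le.mp hzS2
  have hb0 : 0 ≤ β * ‖z - x₁‖ ^ 2 := by positivity
  have A1 : ‖z - x₁‖ < N * r := by
    refine lt_of_le_of_ne (by simpa [dist_eq_norm] using hzS.1) fun h => ?_
    have h5 : (⟪e, z - x₁⟫_ℝ + 2 * r) ^ 2 ≤ (4 * r) ^ 2 := by
      apply sq_le_sq'  <;> linarith
    have h6 := mul_le_mul_of_nonneg_left h5 hα0.le
    have h7 : β * ‖z - x₁‖ ^ 2 = 32 * κ * α * r ^ 2 := by
      rw [h, hN, ← hβκ]; ring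
    have h8 : 2 * (α * r ^ 2) ≤ κ * (α * r ^ 2) := mul_le_mul_of_nonneg_right hκ2 (by positivity)
    nlinarith
  have A2 : -(2 * r) < ⟪e, z - x₁⟫_ℝ := by
    refine lt_of_le_of_ne hl fun h => ?_
    rw [← h] at hφz
    simp at hφz
    nlinarith
  have A3 : ⟪e, z - x₁⟫_ℝ < 2 * r := by
    refine lt_of_le_of_ne hu fun h => ?_
    rw [h] at hφz
    have e2 := h₂ z hzΩ
    have e1 := h₁ x₂ hx₂
    have e3 : ⟪q, z - x₂⟫_ℝ = ⟪p₂, z - x₂⟫_ℝ + ⟪p₁, x₂ - x₁⟫_ℝ - ⟪p₁, z - x₁⟫_ℝ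
        + M / 2 * (‖z - x₁‖ ^ 2 - ‖z - x₂‖ ^ 2 - ‖x₂ - x₁‖ ^ 2) := by
      have : z - x₁ = (z - x₂) + (x₂ - x₁) := by abel
      rw [this, norm_add_sq_real, inner_add_right]
      have : q = (p₂ - p₁) + M • (x₂ - x₁) := by rw [hq, smul_sub]; abel
      rw [this, inner_add_left, inner_sub_left, inner_smul_left,
        real_inner_comm (z - x₂) (x₂ - x₁)]
      simp
      ring
    have e4 : ⟪q, z - x₂⟫_ℝ = ‖q‖ * (⟪e, z - x₁⟫_ℝ - ⟪e, x₂ - x₁⟫_ℝ) := by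
      conv_lhs => rw [hqe, inner_smul_left]
      rw [← inner_sub_right]; simp
    have e5 : ⟪e, x₂ - x₁⟫_ℝ ≤ r := by
      have := real_inner_le_norm e (x₂ - x₁)
      rw [he1] at this; linarith
    rw [h] at e4
    have e6 : ‖q‖ * r ≤ ‖q‖ * (2 * r - ⟪e, x₂ - x₁⟫_ℝ) :=
      mul_le_mul_of_nonneg_left (by linarith) hq0.le
    have e7 : ‖q‖ * r = 16 * α * r ^ 2 := by rw [hαq]; ring
    linarith only [hDz, hφz, e1, e2, e3, e4, e6, e7, hb0, hpos]
  have hnhds : S ∈ nhds z := by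
    refine Filter.inter_mem (closedBall_mem_nhds_of_mem (by simpa [dist_eq_norm] using A1)) ?_
    have : {x : Euc n | |⟪e, x - x₁⟫_ℝ| < 2 * r} ∈ nhds z :=
      (isOpen_lt hci continuous_const).mem_nhds (abs_lt.mpr ⟨A2, A3⟩)
    refine Filter.mem_of_superset this fun x hx => ?_
    rw [Set.mem_ofPred_eq] at hx ⊢
    exact hx.le
  refine no_touch lam Lam hlam hLam Ω v hv φ _ _ z hzΩ d0 d1 (d2 z) (2 * α) (2 * (M / 2 + β))
    (by positivity) (by positivity) e ?_ ?_ (hz.isLocalMin hnhds)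
  · intro u
    simp [sub_eq_neg_add]
  · rw [he1, hκl]
    have : κ * lam * (2 * (M / 2 + β)) = lam * (κ * M + 2 * κ * β) := by ring
    rw [this, hβκ]
    have h9 := mul_lt_mul_of_pos_left hακ hlam
    linarith only [h9]

/-! ### Barrier -/

lemma exp_deriv {n : ℕ} (s : Euc n) (A α : ℝ) :
    let φ : Euc n → ℝ := fun x => A * Real.exp (-(α * ‖x‖ ^ 2)) + ⟪s, x⟫_ℝ
    let g : Euc n → Euc n := fun x => (-(2 * α * A) * Real.exp (-(α * ‖x‖ ^ 2))) • x + s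
    let G : Euc n → Euc n →L[ℝ] Euc n := fun y =>
      (-(2 * α * A) * Real.exp (-(α * ‖y‖ ^ 2))) • ContinuousLinearMap.id ℝ (Euc n) +
        ((4 * α ^ 2 * A * Real.exp (-(α * ‖y‖ ^ 2))) • innerSL ℝ y).smulRight y
    ContDiff ℝ 2 φ ∧ (∀ y, HasFDerivAt φ (innerSL ℝ (g y)) y) ∧ ∀ y, HasFDerivAt g (G y) y := by
  intro φ g G
  have hE : ∀ y : Euc n, HasFDerivAt (fun x : Euc n => Real.exp (-(α * ‖x‖ ^ 2)))
      ((-(2 * α) * Real.exp (-(α * ‖y‖ ^ 2))) • innerSL ℝ y) y := by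
    intro y
    have := (((hasFDerivAt_id y).norm_sq.const_mul α).neg).exp
    refine this.congr_fderiv ?_
    ext u
    simp
    ring
  refine ⟨?_, ?_, ?_⟩
  · exact (contDiff_const.mul ((contDiff_const.mul (contDiff_norm_sq ℝ)).neg.exp)).add
      (ContDiff.inner ℝ contDiff_const contDiff_id)
  · intro y
    have := ((hE y).const_mul A).add (innerSL ℝ s).hasFDerivAt
    refine this.congr_fderiv ?_
    ext u
    simp [g, inner_add_left, inner_smul_left]
    ring
  · intro y
    have := (((hE y).const_mul (-(2 * α * A))).smul (hasFDerivAt_id y)).add_const s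
    refine this.congr_fderiv ?_
    ext u
    simp [G]
    left
    ring

/-- existence of a contact point with the barrier plus an affine function of slope `s` -/
lemma exists_contact {n : ℕ} (lam Lam : ℝ) (hlam : 0 < lam) (hLam : lam ≤ Lam)
    (Ω : Set (Euc n)) (v : Euc n → ℝ) (hc : ContinuousOn v Ω)
    (hv : ViscSupersol lam Lam Ω v) (R : ℝ) (hR : 0 < R) (hball : closedBall 0 R ⊆ Ω)
    (x₀ p₀ : Euc n) (hx₀ : ‖x₀‖ ≤ 3 / 4 * R)
    (h₀ : ∀ x ∈ Ω, v x ≥ v x₀ + ⟪p₀, x - x₀⟫_ℝ - 1 / 2 * ‖x - x₀‖ ^ 2)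
    (α A : ℝ) (hα : 0 < α) (hA : 0 < A) (hα2 : 2 * (n * Lam) < lam * α)
    (hAR : 2 * R + 2 * R ^ 2 + 1 ≤
      A * (Real.exp (-(α * (3 / 4 * R) ^ 2)) - Real.exp (-(α * R ^ 2))))
    (s : Euc n) (hs : ‖s - p₀‖ < 1) :
    ∃ xb : Euc n, ‖xb‖ < 1 / 2 ∧ ∀ x ∈ closedBall (0 : Euc n) R,
      v xb - (A * Real.exp (-(α * ‖xb‖ ^ 2)) + ⟪s, xb⟫_ℝ) ≤
      v x - (A * Real.exp (-(α * ‖x‖ ^ 2)) + ⟪s, x⟫_ℝ) := by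
  obtain ⟨d0, d1, d2⟩ := exp_deriv s A α
  set φ : Euc n → ℝ := fun x => A * Real.exp (-(α * ‖x‖ ^ 2)) + ⟪s, x⟫_ℝ with hφ
  have hx₀B : x₀ ∈ closedBall (0 : Euc n) R := by
    rw [mem_closedBall_zero_iff]; linarith
  obtain ⟨z, hzB, hz⟩ := (isCompact_closedBall (0 : Euc n) R).exists_isMinOn
    (f := fun x => v x - φ x) ⟨x₀, hx₀B⟩ ((hc.mono hball).sub d0.continuous.continuousOn)
  refine ⟨z, ?_, fun x hx => hz hx⟩
  by_contra! hz2
  have hzR : ‖z‖ < R := by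
    refine lt_of_le_of_ne (by simpa using hzB) fun h => ?_
    have e1 : v z - φ z ≤ v x₀ - φ x₀ := hz hx₀B
    have e2 := h₀ z (hball hzB)
    have e3 : ‖z - x₀‖ ≤ 2 * R := by
      have := norm_sub_le z x₀; linarith
    have e4 : -(2 * R) ≤ ⟪p₀ - s, z - x₀⟫_ℝ := by
      have a1 := abs_le.mp (abs_real_inner_le_norm (p₀ - s) (z - x₀))
      have a2 : ‖p₀ - s‖ * ‖z - x₀‖ ≤ 1 * (2 * R) := by
        apply mul_le_mul _ e3 (norm_nonneg _) zero_le_one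
        rw [norm_sub_rev]; exact hs.le
      linarith [a1.1]
    have e5 : ‖z - x₀‖ ^ 2 ≤ (2 * R) ^ 2 := by gcongr
    have e6 : A * Real.exp (-(α * (3 / 4 * R) ^ 2)) ≤ A * Real.exp (-(α * ‖x₀‖ ^ 2)) := by
      gcongr
    simp only [hφ, h] at e1
    rw [inner_sub_left, inner_sub_right s] at e4
    nlinarith
  refine no_touch lam Lam hlam hLam Ω v hv φ _ _ z (hball hzB) d0 d1 (d2 z)
    (4 * α ^ 2 * A * Real.exp (-(α * ‖z‖ ^ 2))) (2 * α * A * Real.exp (-(α * ‖z‖ ^ 2)))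
    (by positivity) (by positivity) z ?_ ?_
    (hz.isLocalMin (closedBall_mem_nhds_of_mem (by simpa using hzR)))
  · intro u
    simp [sub_eq_neg_add]
  · have h1 : (1 / 2) ^ 2 ≤ ‖z‖ ^ 2 := by gcongr
    have h2 : n * Lam < lam * (2 * α) * ‖z‖ ^ 2 := by
      have : lam * (2 * α) * (1 / 2) ^ 2 ≤ lam * (2 * α) * ‖z‖ ^ 2 := by gcongr
      linarith
    have h3 : 0 < 2 * α * A * Real.exp (-(α * ‖z‖ ^ 2)) := by positivity
    nlinarith [mul_lt_mul_of_pos_right h2 h3]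

lemma contact_paraboloid {n : ℕ}
    (Ω : Set (Euc n)) (v : Euc n → ℝ) (R : ℝ) (hR : 2 ≤ R)
    (x₀ p₀ : Euc n) (hx₀ : ‖x₀‖ ≤ 3 / 4 * R)
    (h₀ : ∀ x ∈ Ω, v x ≥ v x₀ + ⟪p₀, x - x₀⟫_ℝ - 1 / 2 * ‖x - x₀‖ ^ 2)
    (α A : ℝ) (hα : 0 < α) (hA : 0 < A)
    (s : Euc n) (hs : ‖s - p₀‖ < 1) (xb : Euc n) (hxb : ‖xb‖ < 1 / 2)
    (hmin : ∀ x ∈ closedBall (0 : Euc n) R,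
      v xb - (A * Real.exp (-(α * ‖xb‖ ^ 2)) + ⟪s, xb⟫_ℝ) ≤
      v x - (A * Real.exp (-(α * ‖x‖ ^ 2)) + ⟪s, x⟫_ℝ)) :
    ∀ x ∈ Ω, v x ≥ v xb + ⟪s - (2 * α * A * Real.exp (-(α * ‖xb‖ ^ 2))) • xb, x - xb⟫_ℝ -
      (36 + 2 * A + 2 * α * A) / 2 * ‖x - xb‖ ^ 2 := by
  intro x hx
  set E := Real.exp (-(α * ‖xb‖ ^ 2)) with hE
  have hE0 : 0 < E := Real.exp_pos _
  have hE1 : E ≤ 1 := Real.exp_le_one_iff.mpr (by simp; positivity)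
  have hip : ⟪s - (2 * α * A * E) • xb, x - xb⟫_ℝ =
      ⟪s, x⟫_ℝ - ⟪s, xb⟫_ℝ - 2 * α * A * E * ⟪xb, x - xb⟫_ℝ := by
    rw [inner_sub_left, inner_smul_left, inner_sub_right s]; simp
  rw [hip]
  set d := ‖x - xb‖ with hd
  have hd0 : 0 ≤ d := norm_nonneg _
  by_cases hxR : ‖x‖ ≤ R
  · have h1 := hmin x (by simpa using hxR)
    have h2 : E * (1 - α * (2 * ⟪xb, x - xb⟫_ℝ + d ^ 2)) ≤ Real.exp (-(α * ‖x‖ ^ 2)) := by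
      have : ‖x‖ ^ 2 = ‖xb‖ ^ 2 + 2 * ⟪xb, x - xb⟫_ℝ + d ^ 2 := by
        rw [hd, ← norm_add_sq_real]; congr 2; abel
      have h3 : Real.exp (-(α * ‖x‖ ^ 2)) =
          E * Real.exp (-(α * (2 * ⟪xb, x - xb⟫_ℝ + d ^ 2))) := by
        rw [hE, ← Real.exp_add, this]; congr 1; ring
      rw [h3]
      gcongr
      have := Real.add_one_le_exp (-(α * (2 * ⟪xb, x - xb⟫_ℝ + d ^ 2)))
      linarith
    have h4 := mul_le_mul_of_nonneg_left h2 hA.le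
    have h5 : A * α * d ^ 2 * E ≤ A * α * d ^ 2 * 1 := by gcongr
    have h6 : 0 ≤ (18 + A) * d ^ 2 := by positivity
    nlinarith
  · push Not at hxR
    have h1 := hmin x₀ (by rw [mem_closedBall_zero_iff]; linarith)
    have h2 := h₀ x hx
    have hd1 : R - 1 / 2 ≤ d := by
      have := norm_sub_norm_le x xb; linarith
    have hd2 : 1 ≤ d := by linarith
    have hx0d : ‖x - x₀‖ ≤ 5 * d := by
      have : x - x₀ = (x - xb) + xb - x₀ := by abel
      have h3 := norm_sub_le ((x - xb) + xb) x₀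
      have h4 := norm_add_le (x - xb) xb
      rw [← this] at h3
      linarith
    have h3 : -(5 * d) ≤ ⟪p₀ - s, x - x₀⟫_ℝ := by
      have a1 := abs_le.mp (abs_real_inner_le_norm (p₀ - s) (x - x₀))
      have a2 : ‖p₀ - s‖ * ‖x - x₀‖ ≤ 1 * (5 * d) := by
        apply mul_le_mul _ hx0d (norm_nonneg _) zero_le_one
        rw [norm_sub_rev]; exact hs.le
      linarith [a1.1]
    rw [inner_sub_left, inner_sub_right s] at h3
    have h4 : ‖x - x₀‖ ^ 2 ≤ (5 * d) ^ 2 := by gcongr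
    have h5 : -(d / 2) ≤ ⟪xb, x - xb⟫_ℝ := by
      have a1 := abs_le.mp (abs_real_inner_le_norm xb (x - xb))
      have a2 : ‖xb‖ * ‖x - xb‖ ≤ 1 / 2 * d := by gcongr
      linarith [a1.1]
    have h6 : -(α * A * d) ≤ 2 * α * A * E * ⟪xb, x - xb⟫_ℝ := by
      have a1 : 2 * α * A * E * (-(d / 2)) ≤ 2 * α * A * E * ⟪xb, x - xb⟫_ℝ := by gcongr
      have a2 : α * A * d * E ≤ α * A * d * 1 := by gcongr
      linarith
    have h7 : 0 ≤ A * Real.exp (-(α * ‖x₀‖ ^ 2)) := by positivity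
    have h8 : A * E ≤ A * 1 := by gcongr
    have h9 : d ≤ d ^ 2 := by nlinarith
    have h10 : A ≤ A * d ^ 2 := by nlinarith
    have h11 : α * A * d ≤ α * A * d ^ 2 := by gcongr
    nlinarith

lemma exp_lip {n : ℕ} (α : ℝ) (hα : 0 < α) (x y : Euc n) (hx : ‖x‖ < 1 / 2) (hy : ‖y‖ < 1 / 2) :
    ‖Real.exp (-(α * ‖x‖ ^ 2)) • x - Real.exp (-(α * ‖y‖ ^ 2)) • y‖ ≤ (1 + α) * ‖x - y‖ := by
  have hle : ∀ a b : ℝ, 0 ≤ a → 0 ≤ b → Real.exp (-a) - Real.exp (-b) ≤ |a - b| := by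
    intro a b ha hb
    have h1 : Real.exp (-b) = Real.exp (-a) * Real.exp (a - b) := by
      rw [← Real.exp_add]; congr 1; ring
    have h2 := Real.add_one_le_exp (a - b)
    have h3 : Real.exp (-a) ≤ 1 := Real.exp_le_one_iff.mpr (by linarith)
    have h4 := Real.exp_pos (-a)
    have h5 : Real.exp (-a) * (a - b + 1) ≤ Real.exp (-b) := by rw [h1]; gcongr
    have h6 : Real.exp (-a) * (b - a) ≤ Real.exp (-a) * |a - b| := by
      gcongr; rw [abs_sub_comm]; exact le_abs_self _
    have h7 : Real.exp (-a) * |a - b| ≤ 1 * |a - b| := by gcongr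
    linarith
  have hab : |Real.exp (-(α * ‖x‖ ^ 2)) - Real.exp (-(α * ‖y‖ ^ 2))| ≤ α * ‖x - y‖ := by
    have h1 : |α * ‖x‖ ^ 2 - α * ‖y‖ ^ 2| ≤ α * ‖x - y‖ := by
      have : α * ‖x‖ ^ 2 - α * ‖y‖ ^ 2 = α * ((‖x‖ + ‖y‖) * (‖x‖ - ‖y‖)) := by ring
      rw [this, abs_mul, abs_of_pos hα, abs_mul]
      have h2 : |‖x‖ + ‖y‖| ≤ 1 := by
        rw [abs_of_nonneg (by positivity)]; linarith
      have h3 := abs_norm_sub_norm_le x y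
      have : |‖x‖ + ‖y‖| * |‖x‖ - ‖y‖| ≤ 1 * ‖x - y‖ := by gcongr
      rw [one_mul] at this
      gcongr
    have h2 := hle (α * ‖x‖ ^ 2) (α * ‖y‖ ^ 2) (by positivity) (by positivity)
    have h3 := hle (α * ‖y‖ ^ 2) (α * ‖x‖ ^ 2) (by positivity) (by positivity)
    rw [abs_sub_comm] at h3
    rw [abs_le]; constructor <;> linarith
  have : Real.exp (-(α * ‖x‖ ^ 2)) • x - Real.exp (-(α * ‖y‖ ^ 2)) • y =
      Real.exp (-(α * ‖x‖ ^ 2)) • (x - y) +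
      (Real.exp (-(α * ‖x‖ ^ 2)) - Real.exp (-(α * ‖y‖ ^ 2))) • y := by
    rw [smul_sub, sub_smul]; abel
  rw [this]
  refine (norm_add_le _ _).trans ?_
  rw [norm_smul, norm_smul, Real.norm_eq_abs, Real.norm_eq_abs, abs_of_pos (Real.exp_pos _)]
  have h1 : Real.exp (-(α * ‖x‖ ^ 2)) ≤ 1 := Real.exp_le_one_iff.mpr (by simp; positivity)
  have h2 : Real.exp (-(α * ‖x‖ ^ 2)) * ‖x - y‖ ≤ 1 * ‖x - y‖ := by gcongr
  have h3 : |Real.exp (-(α * ‖x‖ ^ 2)) - Real.exp (-(α * ‖y‖ ^ 2))| * ‖y‖ ≤ α * ‖x - y‖ * 1 := by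
    gcongr; linarith
  linarith

/-! ### Measure estimate -/

lemma measure_le {n : ℕ} (K : NNReal) (f : Euc n → Euc n) (B : Set (Euc n))
    (hf : ∀ s ∈ B, ∀ t ∈ B, ‖s - t‖ ≤ K * ‖f s - f t‖) :
    volume B ≤ (K : ℝ≥0∞) ^ n * volume (f '' B) := by
  have hinj : Set.InjOn f B := by
    intro s hs t ht h
    have := hf s hs t ht
    rw [h] at this
    simpa [sub_eq_zero] using this
  let g := Function.invFunOn f B
  have hgf : ∀ s ∈ B, g (f s) = s := fun s hs => hinj.leftInvOn_invFunOn hs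
  have hg : LipschitzOnWith K g (f '' B) := by
    apply LipschitzOnWith.of_dist_le_mul
    rintro _ ⟨s, hs, rfl⟩ _ ⟨t, ht, rfl⟩
    rw [hgf s hs, hgf t ht, dist_eq_norm, dist_eq_norm]
    exact hf s hs t ht
  have him : g '' (f '' B) = B := by
    rw [Set.image_image]
    ext s
    constructor
    · rintro ⟨t, ht, rfl⟩; simpa [hgf t ht] using ht
    · intro hs; exact ⟨s, hs, hgf s hs⟩
  have h := hg.hausdorffMeasure_image_le (d := (n : ℝ)) (by positivity)
  rw [him] at h
  have : (μH[(n : ℝ)] : Measure (Euc n)).IsAddHaarMeasure := by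
    simpa using MeasureTheory.isAddHaarMeasure_hausdorffMeasure (E := Euc n)
  have hu := Measure.isAddLeftInvariant_eq_smul (volume : Measure (Euc n)) (μH[(n : ℝ)])
  rw [hu, Measure.smul_apply, Measure.smul_apply]
  set c := Measure.addHaarScalarFactor (volume : Measure (Euc n)) (μH[(n : ℝ)])
  rw [ENNReal.rpow_natCast] at h
  simp only [ENNReal.smul_def, smul_eq_mul]
  calc _ ≤ (c : ℝ≥0∞) * ((K : ℝ≥0∞) ^ n * μH[(n : ℝ)] (f '' B)) := by gcongr
    _ = _ := by ring

/-- measure and localization estimate (abstract form): existence of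
M > 1 and σ ∈ (0,1) depending only on n, λ, Λ. -/
theorem stmt_3 (n : ℕ) (hn : 2 ≤ n) (lam Lam : ℝ) (hlam : 0 < lam) (hLam : lam ≤ Lam) :
    ∃ M : ℝ, 1 < M ∧ ∃ σ ∈ Set.Ioo (0 : ℝ) 1,
      ∀ Ω : Set (Euc n), IsOpen Ω → closedBall 0 (2 * Real.sqrt n) ⊆ Ω →
        ∀ v : Euc n → ℝ, ContinuousOn v Ω → ViscSupersol lam Lam Ω v →
          (Gm 1 v Ω ∩ cube 3 0).Nonempty →
          ENNReal.ofReal (1 - σ) ≤ volume (Gm M v Ω ∩ cube 1 0) := by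
  have hn' : (2 : ℝ) ≤ n := by exact_mod_cast hn
  have hLam0 : 0 < Lam := hlam.trans_le hLam
  set R : ℝ := 2 * Real.sqrt n with hRdef
  have hR : 2 ≤ R := by
    have : 1 ≤ Real.sqrt n := Real.one_le_sqrt.mpr (by linarith)
    linarith
  have hR0 : 0 < R := by linarith
  set α : ℝ := 2 * (n * Lam) / lam + 1 with hα
  have hα0 : 0 < α := by positivity
  have hα2 : 2 * (n * Lam) < lam * α := by
    have : lam * α = 2 * (n * Lam) + lam := by rw [hα]; field_simp
    linarith
  have hgap : 0 < Real.exp (-(α * (3 / 4 * R) ^ 2)) - Real.exp (-(α * R ^ 2)) := by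
    rw [sub_pos, Real.exp_lt_exp, neg_lt_neg_iff]
    have : (3 / 4 * R) ^ 2 < R ^ 2 := by
      apply pow_lt_pow_left₀ <;> first | linarith | positivity | norm_num
    gcongr
  set A : ℝ := (2 * R + 2 * R ^ 2 + 1) /
    (Real.exp (-(α * (3 / 4 * R) ^ 2)) - Real.exp (-(α * R ^ 2))) with hA
  have hA0 : 0 < A := by positivity
  have hAR : 2 * R + 2 * R ^ 2 + 1 ≤
      A * (Real.exp (-(α * (3 / 4 * R) ^ 2)) - Real.exp (-(α * R ^ 2))) := by
    rw [hA, div_mul_cancel₀ _ hgap.ne']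
  set M : ℝ := 36 + 2 * A + 2 * α * A with hM
  have hαA : 0 < α * A := by positivity
  have hM1 : 1 < M := by linarith
  set κ : ℝ := n * Lam / lam with hκ
  have hκ0 : 0 < κ := by positivity
  set K : ℝ := 16 * κ * M + M + 2 * α * A * (1 + α) + 2 * (8 * κ) with hK
  have hK0 : 0 < K := by positivity
  have hVpos : 0 < volume (ball (0 : Euc n) 1) := measure_ball_pos _ _ one_pos
  have hVfin : volume (ball (0 : Euc n) 1) ≠ ⊤ := measure_ball_lt_top.ne
  set c : ℝ := (volume (ball (0 : Euc n) 1)).toReal / K ^ n with hc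
  have hc0 : 0 < c := div_pos (ENNReal.toReal_pos hVpos.ne' hVfin) (by positivity)
  refine ⟨M, hM1, 1 - min c (1 / 2), ⟨?_, ?_⟩, ?_⟩
  · have := min_le_right c (1 / 2); linarith
  · have : 0 < min c (1 / 2) := lt_min hc0 (by norm_num)
    linarith
  intro Ω hΩ hball v hcont hv hne
  obtain ⟨x₀, ⟨hx₀Ω, p₀, h₀⟩, hx₀c⟩ := hne
  have hx₀ : ‖x₀‖ ≤ 3 / 4 * R := by
    have h1 : ‖x₀‖ ^ 2 ≤ (3 / 4 * R) ^ 2 := by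
      rw [EuclideanSpace.real_norm_sq_eq]
      have h2 : ∀ i ∈ Finset.univ, x₀ i ^ 2 ≤ (9 / 4 : ℝ) := by
        intro i _
        have := hx₀c i
        simp at this
        have := abs_lt.mp this
        nlinarith [this.1, this.2]
      refine (Finset.sum_le_sum h2).trans ?_
      simp
      rw [hRdef, mul_pow, mul_pow, Real.sq_sqrt (by positivity)]
      linarith
    exact le_of_sq_le_sq h1 (by positivity)
  have hex := fun s : Euc n => fun hs : ‖s - p₀‖ < 1 => exists_contact lam Lam hlam hLam Ω v hcont hv
    R hR0 hball x₀ p₀ hx₀ h₀ α A hα0 hA0 hα2 hAR s hs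
  choose! f hf1 hf2 using hex
  have hpar := fun s : Euc n => fun hs : ‖s - p₀‖ < 1 => contact_paraboloid Ω v R hR x₀ p₀ hx₀ h₀
    α A hα0 hA0 s hs (f s) (hf1 s hs) (hf2 s hs)
  have hfΩ : ∀ s : Euc n, ‖s - p₀‖ < 1 → f s ∈ Ω := by
    intro s hs
    apply hball
    rw [mem_closedBall_zero_iff]
    linarith [hf1 s hs]
  have hsub : f '' ball p₀ 1 ⊆ Gm M v Ω ∩ cube 1 0 := by
    rintro _ ⟨s, hs, rfl⟩
    rw [mem_ball_iff_norm] at hs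
    refine ⟨⟨hfΩ s hs, _, hpar s hs⟩, ?_⟩
    intro i
    have h1 := PiLp.norm_apply_le (f s) i
    have h2 := hf1 s hs
    simp only [PiLp.zero_apply, sub_zero]
    rw [Real.norm_eq_abs] at h1
    linarith
  have hlip : ∀ s ∈ ball p₀ 1, ∀ t ∈ ball p₀ 1, ‖s - t‖ ≤ K * ‖f s - f t‖ := by
    intro s hs t ht
    rw [mem_ball_iff_norm] at hs ht
    by_cases hfar : 1 / (8 * κ) < ‖f s - f t‖
    · have h1 : ‖s - t‖ ≤ 2 := by
        have : s - t = (s - p₀) - (t - p₀) := by abel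
        rw [this]
        have := norm_sub_le (s - p₀) (t - p₀)
        linarith
      have h2 : 1 < 8 * κ * ‖f s - f t‖ := by
        rw [div_lt_iff₀ (by positivity)] at hfar; linarith
      have h3 : 0 ≤ (16 * κ * M + M + 2 * α * A * (1 + α)) * ‖f s - f t‖ := by positivity
      have h5 : K * ‖f s - f t‖ = (16 * κ * M + M + 2 * α * A * (1 + α)) * ‖f s - f t‖ +
        2 * (8 * κ * ‖f s - f t‖) := by rw [hK]; ring
      linarith only [h1, h2, h3, h5]
    · push Not at hfar
      set qs := s - (2 * α * A * Real.exp (-(α * ‖f s‖ ^ 2))) • f s with hqs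
      set qt := t - (2 * α * A * Real.exp (-(α * ‖f t‖ ^ 2))) • f t with hqt
      have hq : ‖qs + M • f s - (qt + M • f t)‖ ≤ 16 * κ * M * ‖f s - f t‖ := by
        have hgen : ∀ r, 0 < r → ‖f s - f t‖ ≤ r → r ≤ 1 / (8 * κ) →
            ‖qs + M • f s - (qt + M • f t)‖ ≤ 16 * κ * M * r := by
          intro r hr0 hr1 hr2
          refine lip_contact hn lam Lam hlam hLam Ω v hcont hv M (by linarith) (f t) (f s) qt qs
            (hfΩ t ht) (hfΩ s hs) (hpar t ht) (hpar s hs) r hr0 hr1 ?_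
          refine Set.Subset.trans ?_ hball
          apply closedBall_subset_closedBall'
          rw [le_div_iff₀ (by positivity)] at hr2
          rw [dist_zero_right]
          have := hf1 t ht
          linarith
        rcases (norm_nonneg (f s - f t)).eq_or_lt with h0 | h0
        · rw [← h0, mul_zero]
          apply le_of_forall_pos_le_add
          intro ε hε
          have hε' : 0 < ε / (16 * κ * M) := by positivity
          have := hgen (min (ε / (16 * κ * M)) (1 / (8 * κ))) (lt_min hε' (by positivity))
            (by rw [← h0]; exact (lt_min hε' (by positivity)).le) (min_le_right _ _)
          refine this.trans ?_
          calc _ ≤ 16 * κ * M * (ε / (16 * κ * M)) := by gcongr; exact min_le_left _ _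
            _ = ε := by field_simp
            _ ≤ 0 + ε := by linarith
        · exact hgen _ h0 le_rfl hfar
      have hst : s - t = (qs + M • f s - (qt + M • f t)) - M • (f s - f t) + (2 * α * A) •
          (Real.exp (-(α * ‖f s‖ ^ 2)) • f s - Real.exp (-(α * ‖f t‖ ^ 2)) • f t) := by
        rw [hqs, hqt]; module
      have hE := exp_lip α hα0 (f s) (f t) (hf1 s hs) (hf1 t ht)
      have h1 := norm_add_le ((qs + M • f s - (qt + M • f t)) - M • (f s - f t)) ((2 * α * A) •
          (Real.exp (-(α * ‖f s‖ ^ 2)) • f s - Real.exp (-(α * ‖f t‖ ^ 2)) • f t))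
      have h2 := norm_sub_le (qs + M • f s - (qt + M • f t)) (M • (f s - f t))
      rw [← hst] at h1
      rw [norm_smul (2 * α * A), Real.norm_of_nonneg (by positivity)] at h1
      rw [norm_smul M, Real.norm_of_nonneg (by positivity)] at h2
      have h3 : 2 * α * A * ‖Real.exp (-(α * ‖f s‖ ^ 2)) • f s - Real.exp (-(α * ‖f t‖ ^ 2)) • f t‖
        ≤ 2 * α * A * ((1 + α) * ‖f s - f t‖) := by gcongr
      have h4 : 0 ≤ 2 * (8 * κ) * ‖f s - f t‖ := by positivity
      have h5 : K * ‖f s - f t‖ = 16 * κ * M * ‖f s - f t‖ + M * ‖f s - f t‖ +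
        2 * α * A * ((1 + α) * ‖f s - f t‖) + 2 * (8 * κ) * ‖f s - f t‖ := by rw [hK]; ring
      linarith only [h1, h2, h3, h4, h5, hq]
  have hmeas := measure_le K.toNNReal f (ball p₀ 1) (by rwa [Real.coe_toNNReal K hK0.le])
  rw [Measure.addHaar_ball_center] at hmeas
  refine le_trans ?_ (measure_mono hsub)
  have hsig : 1 - (1 - min c (1 / 2)) ≤ c := by
    have := min_le_left c (1 / 2); linarith
  refine (ENNReal.ofReal_le_ofReal hsig).trans ?_
  have hKe : (K.toNNReal : ℝ≥0∞) = ENNReal.ofReal K := rfl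
  rw [hKe, ← ENNReal.ofReal_pow hK0.le] at hmeas
  rw [hc, ENNReal.ofReal_div_of_pos (by positivity), ENNReal.ofReal_toReal hVfin]
  exact ENNReal.div_le_of_le_mul' hmeas
end
end

section
/- Let n ≥ 2 be an integer and 0 < λ ≤ Λ real constants. Let Ω ⊆ ℝⁿ be an open set containing the closure of Q₂, and let v : Ω → ℝ be a continuous viscosity supersolution of M⁻_{λ,Λ}(D²v) ≤ 0 in Ω. If G⁻_{1/n}(v,Ω) ∩ Q_{1/(4√n)} ≠ ∅, then |G⁻₃₂(v,Ω) ∩ Q₁| ≥ (1−σ)·|Q₁|, where σ := 1 − (λ/(λ+(n−1)Λ))^n · (1/(4√n))^n. -/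
open MeasureTheory Metric
open scoped InnerProductSpace ENNReal

noncomputable section

/-- Moreau envelope of a convex Lipschitz function. -/
theorem moreau_aux {n : ℕ} (f : Euc n → ℝ) (R τ : ℝ) (hτ : 0 < τ)
    (hconv : ConvexOn ℝ Set.univ f) (hlip : ∀ x y, f x - f y ≤ R * ‖x - y‖) :
    ∃ (e : Euc n → ℝ) (z : Euc n → Euc n),
      (∀ x w, e x ≤ f w + τ / 2 * ‖x - w‖ ^ 2) ∧
      (∀ x, e x = f (z x) + τ / 2 * ‖x - z x‖ ^ 2) ∧
      (∀ x w, f (z x) + ⟪τ • (x - z x), w - z x⟫_ℝ ≤ f w) := by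
  have hcont : Continuous f := by
    have hl : LipschitzWith (Real.toNNReal R) f := by
      apply LipschitzWith.of_le_add_mul
      intro x y
      have := hlip x y
      rw [dist_eq_norm]
      have h2 : R * ‖x - y‖ ≤ (Real.toNNReal R : ℝ) * ‖x - y‖ :=
        mul_le_mul_of_nonneg_right (Real.le_coe_toNNReal R) (norm_nonneg _)
      linarith
    exact hl.continuous
  have hmin : ∀ x, ∃ z, ∀ w, f z + τ / 2 * ‖x - z‖ ^ 2 ≤ f w + τ / 2 * ‖x - w‖ ^ 2 := by
    intro x
    have hc : Continuous (fun w => f w + τ / 2 * ‖x - w‖ ^ 2) := by fun_prop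
    set r := 2 * |R| / τ + 1 with hr
    have hr0 : 0 < r := by positivity
    obtain ⟨z, hz, hzm⟩ := (isCompact_closedBall x r).exists_isMinOn ⟨x, by simp [hr0.le]⟩
      hc.continuousOn
    refine ⟨z, fun w => ?_⟩
    by_cases hw : w ∈ closedBall x r
    · exact hzm hw
    · have h1 : f z + τ / 2 * ‖x - z‖ ^ 2 ≤ f x + τ / 2 * ‖x - x‖ ^ 2 :=
        hzm (show x ∈ closedBall x r by simp [hr0.le])
      simp only [sub_self, norm_zero] at h1
      have h2 := hlip x w
      have h3 : r < ‖x - w‖ := by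
        rw [mem_closedBall, dist_comm, dist_eq_norm] at hw
        exact not_le.mp hw
      have h4 : R ≤ |R| := le_abs_self R
      have h5 : |R| ≤ τ / 2 * r := by
        rw [hr]; field_simp; nlinarith [abs_nonneg R]
      have h6 : R * ‖x - w‖ ≤ τ / 2 * ‖x - w‖ ^ 2 := by
        have h7 : R ≤ τ / 2 * ‖x - w‖ := by nlinarith
        nlinarith [norm_nonneg (x - w)]
      linarith
  choose z hz using hmin
  refine ⟨fun x => f (z x) + τ / 2 * ‖x - z x‖ ^ 2, z, fun x w => hz x w, fun x => rfl, ?_⟩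
  intro x w
  -- f (z + s (w - z)) ≤ (1-s) f z + s f w
  have key : ∀ s : ℝ, 0 < s → s ≤ 1 →
      f (z x) + ⟪τ • (x - z x), w - z x⟫_ℝ ≤ f w + s * (τ / 2 * ‖w - z x‖ ^ 2) := by
    intro s hs hs1
    have h1 := hconv.2 (Set.mem_univ (z x)) (Set.mem_univ w) (show 0 ≤ 1 - s by linarith) hs.le
      (by ring)
    have h2 := hz x ((1 - s) • z x + s • w)
    have h3 : x - ((1 - s) • z x + s • w) = (x - z x) - s • (w - z x) := by
      module
    rw [h3, norm_sub_sq_real (x - z x), real_inner_smul_right, norm_smul, mul_pow, Real.norm_eq_abs,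
      sq_abs] at h2
    rw [real_inner_smul_left]
    simp only [smul_eq_mul] at h1
    have h4 : s * (f (z x) + τ * ⟪x - z x, w - z x⟫_ℝ) ≤
      s * (f w + s * (τ / 2 * ‖w - z x‖ ^ 2)) := by nlinarith
    exact le_of_mul_le_mul_left h4 hs
  by_contra hcon
  push Not at hcon
  set D := f (z x) + ⟪τ • (x - z x), w - z x⟫_ℝ - f w with hD
  set N := τ / 2 * ‖w - z x‖ ^ 2 with hN
  have hN0 : 0 ≤ N := by positivity
  have hD0 : 0 < D := by linarith
  have hs : 0 < D / (D + N + 1) / 2 := by positivity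
  have := key (min 1 (D / (N + 1) / 2)) (by positivity) (min_le_left _ _)
  have h5 : min 1 (D / (N + 1) / 2) * N ≤ D / (N + 1) / 2 * N :=
    mul_le_mul_of_nonneg_right (min_le_right _ _) hN0
  have h6 : D / (N + 1) / 2 * N < D := by
    field_simp
    nlinarith
  linarith

/-- properties of gradient of Moreau envelope -/
theorem moreau {n : ℕ} (f : Euc n → ℝ) (R τ : ℝ) (hτ : 0 < τ) (hR : 0 ≤ R)
    (hconv : ConvexOn ℝ Set.univ f) (hlip : ∀ x y, f x - f y ≤ R * ‖x - y‖) :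
    ∃ (e : Euc n → ℝ) (p : Euc n → Euc n),
      (∀ x w, e x ≤ f w + τ / 2 * ‖x - w‖ ^ 2) ∧
      (∀ x, e x = f (x - τ⁻¹ • p x) + τ / 2 * ‖τ⁻¹ • p x‖ ^ 2) ∧
      (∀ x w, f (x - τ⁻¹ • p x) + ⟪p x, w - (x - τ⁻¹ • p x)⟫_ℝ ≤ f w) ∧
      (∀ x, ‖p x‖ ≤ R) ∧
      (∀ x y, 0 ≤ ⟪p x - p y, x - y⟫_ℝ) ∧
      LipschitzWith τ.toNNReal p ∧
      (∀ x, HasFDerivAt e (innerSL ℝ (p x)) x) ∧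
      (∀ z q, (∀ w, f z + ⟪q, w - z⟫_ℝ ≤ f w) → p (z + τ⁻¹ • q) = q) := by
  obtain ⟨e, z, h1, h2, h3⟩ := moreau_aux f R τ hτ hconv hlip
  have hz : ∀ x, x - τ⁻¹ • (τ • (x - z x)) = z x := by
    intro x; rw [smul_smul, inv_mul_cancel₀ hτ.ne']; simp
  have mono : ∀ z₁ q₁ z₂ q₂, (∀ w, f z₁ + ⟪q₁, w - z₁⟫_ℝ ≤ f w) →
      (∀ w, f z₂ + ⟪q₂, w - z₂⟫_ℝ ≤ f w) → 0 ≤ ⟪q₁ - q₂, z₁ - z₂⟫_ℝ := by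
    intro z₁ q₁ z₂ q₂ ha hb
    have ha := ha z₂
    have hb := hb z₁
    have : ⟪q₁, z₂ - z₁⟫_ℝ = - ⟪q₁, z₁ - z₂⟫_ℝ := by rw [← inner_neg_right, neg_sub]
    rw [inner_sub_left]
    linarith
  obtain ⟨p, hp⟩ : ∃ p : Euc n → Euc n, ∀ x, p x = τ • (x - z x) := ⟨_, fun _ => rfl⟩
  have hzp : ∀ x, x - τ⁻¹ • p x = z x := fun x => by rw [hp, hz]
  have hsub : ∀ x w, f (z x) + ⟪p x, w - z x⟫_ℝ ≤ f w := fun x w => by rw [hp]; exact h3 x w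
  have hmono1 : ∀ x y, τ⁻¹ * ‖p x - p y‖ ^ 2 ≤ ⟪p x - p y, x - y⟫_ℝ := by
    intro x y
    have := mono _ _ _ _ (hsub x) (hsub y)
    have e1 : x - y = (z x - z y) + τ⁻¹ • (p x - p y) := by
      rw [← hzp x, ← hzp y]; module
    rw [e1, inner_add_right, real_inner_smul_right, real_inner_self_eq_norm_sq]
    linarith
  have hlipp : ∀ x y, ‖p x - p y‖ ≤ τ * ‖x - y‖ := by
    intro x y
    have := hmono1 x y
    have h5 := real_inner_le_norm (p x - p y) (x - y)
    by_cases h0 : ‖p x - p y‖ = 0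
    · rw [h0]; positivity
    · have h6 : 0 < ‖p x - p y‖ := lt_of_le_of_ne (norm_nonneg _) (Ne.symm h0)
      have h7 : τ⁻¹ * ‖p x - p y‖ ^ 2 ≤ ‖p x - p y‖ * ‖x - y‖ := this.trans h5
      have h8 : ‖p x - p y‖ * ‖p x - p y‖ ≤ ‖p x - p y‖ * (τ * ‖x - y‖) := by
        have := mul_le_mul_of_nonneg_left h7 hτ.le
        rw [← mul_assoc, mul_inv_cancel₀ hτ.ne'] at this
        linarith
      exact le_of_mul_le_mul_left h8 h6
  refine ⟨e, p, h1, ?_, ?_, ?_, ?_, ?_, ?_, ?_⟩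
  · intro x
    rw [hzp, h2 x]
    congr 4
    rw [← hzp x]; simp
  · intro x w; rw [hzp]; exact hsub x w
  · intro x
    have h4 := hsub x (z x + p x)
    have h5 := hlip (z x + p x) (z x)
    simp only [add_sub_cancel_left, real_inner_self_eq_norm_sq] at h4 h5
    by_contra hc
    push Not at hc
    by_cases h0 : ‖p x‖ = 0
    · linarith
    · have h6 : 0 < ‖p x‖ := lt_of_le_of_ne (norm_nonneg _) (Ne.symm h0)
      nlinarith
  · intro x y
    exact le_trans (by positivity) (hmono1 x y)
  · apply LipschitzWith.of_dist_le_mul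
    intro x y
    rw [dist_eq_norm, dist_eq_norm, Real.coe_toNNReal _ hτ.le]
    exact hlipp x y
  · intro x
    rw [hasFDerivAt_iff_isLittleO_nhds_zero]
    have : (fun h => e (x + h) - e x - (innerSL ℝ (p x)) h) =O[nhds 0] fun h => ‖h‖ ^ 2 := by
      apply Asymptotics.IsBigO.of_bound (τ / 2)
      filter_upwards with h
      simp only [innerSL_apply_apply, norm_pow, norm_norm]
      have up := h1 (x + h) (z x)
      have ex := h2 x
      have ex' := h2 (x + h)
      have lo := hsub x (z (x + h))
      have z1 := hzp x
      have z2 := hzp (x + h)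
      have e1 : x - z x = τ⁻¹ • p x := by rw [← z1]; simp
      have e2 : x + h - z (x + h) = τ⁻¹ • p (x + h) := by rw [← z2]; simp
      have e3 : x + h - z x = τ⁻¹ • p x + h := by rw [← e1]; abel
      have e4 : z (x + h) - z x = h - τ⁻¹ • p (x + h) + τ⁻¹ • p x := by
        rw [← e1, ← e2]; abel
      rw [e3, norm_add_sq_real, real_inner_smul_left] at up
      rw [e1] at ex
      rw [e2] at ex'
      rw [e4, inner_add_right, inner_sub_right, real_inner_smul_right, real_inner_smul_right,
        real_inner_self_eq_norm_sq] at lo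
      rw [norm_smul, mul_pow, Real.norm_eq_abs, sq_abs] at ex ex' up
      have hsq := norm_sub_sq_real (p x) (p (x + h))
      have hn := sq_nonneg ‖p x - p (x + h)‖
      have hti : 0 < τ⁻¹ := by positivity
      have ht1 : τ / 2 * τ⁻¹ ^ 2 = τ⁻¹ / 2 := by field_simp
      have ht2 : τ * τ⁻¹ = 1 := by field_simp
      rw [← mul_assoc, ht1] at ex ex'
      have up' : e (x + h) ≤ f (z x) + τ⁻¹ / 2 * ‖p x‖ ^ 2 + ⟪p x, h⟫_ℝ + τ / 2 * ‖h‖ ^ 2 := by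
        have : τ / 2 * (τ⁻¹ ^ 2 * ‖p x‖ ^ 2 + 2 * (τ⁻¹ * ⟪p x, h⟫_ℝ) + ‖h‖ ^ 2) =
          (τ / 2 * τ⁻¹ ^ 2) * ‖p x‖ ^ 2 + (τ * τ⁻¹) * ⟪p x, h⟫_ℝ + τ / 2 * ‖h‖ ^ 2 := by ring
        rw [this, ht1, ht2] at up
        linarith
      have lo' : 0 ≤ e (x + h) - e x - ⟪p x, h⟫_ℝ := by
        have : 0 ≤ τ⁻¹ / 2 * ‖p x - p (x + h)‖ ^ 2 := by positivity
        rw [hsq] at this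
        rw [ex, ex']
        nlinarith
      rw [Real.norm_of_nonneg lo']
      linarith
    refine this.trans_isLittleO ?_
    exact Asymptotics.isLittleO_norm_pow_id one_lt_two
  · intro w q hq
    have h4 := mono _ _ _ _ (hsub (w + τ⁻¹ • q)) hq
    rw [← hzp] at h4
    have e1 : w + τ⁻¹ • q - τ⁻¹ • p (w + τ⁻¹ • q) - w = -(τ⁻¹ • (p (w + τ⁻¹ • q) - q)) := by
      module
    rw [e1, inner_neg_right, real_inner_smul_right, real_inner_self_eq_norm_sq] at h4
    have : 0 < τ⁻¹ := by positivity
    have h5 : ‖p (w + τ⁻¹ • q) - q‖ ^ 2 ≤ 0 := by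
      by_contra hc
      push Not at hc
      nlinarith [mul_pos this hc]
    have h6 : ‖p (w + τ⁻¹ • q) - q‖ = 0 := by
      nlinarith [sq_nonneg ‖p (w + τ⁻¹ • q) - q‖, pow_eq_zero_iff (two_ne_zero) |>.mp (le_antisymm h5 (sq_nonneg _))]
    exact sub_eq_zero.mp (norm_eq_zero.mp h6)

theorem pucci_lower {n : ℕ} (lam Lam k : ℝ) (hlam : 0 < lam) (hLam : lam ≤ Lam) (hk : 0 < k)
    (S : Matrix (Fin n) (Fin n) ℝ) (hS : S.PosSemidef)
    (h : pucciInf lam Lam (S - k • 1) ≤ 0) (i : Fin n) :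
    lam * hS.1.eigenvalues i ≤ k * (lam + ((n : ℝ) - 1) * Lam) := by
  by_cases hsk : hS.1.eigenvalues i < k
  · have hn : (1 : ℝ) ≤ n := by
      have := i.pos
      exact_mod_cast this
    have : 0 ≤ ((n : ℝ) - 1) * Lam := mul_nonneg (by linarith) (by linarith)
    nlinarith [mul_nonneg hk.le this]
  push Not at hsk
  have hmain : lam * (hS.1.eigenvalues i - k) - k * (((n : ℝ) - 1) * Lam) ≤
      pucciInf lam Lam (S - k • 1) := by
    apply le_csInf
    · refine ⟨_, lam • 1, ?_, ?_, ?_, rfl⟩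
      · simp [Matrix.IsSymm]
      · simp [matLE, Matrix.PosSemidef.zero]
      · unfold matLE
        rw [← sub_smul]
        exact Matrix.PosSemidef.one.smul (sub_nonneg.mpr hLam)
    · rintro t ⟨A, hA, hA1, hA2, rfl⟩
      set U : Matrix (Fin n) (Fin n) ℝ :=
        (hS.1.eigenvectorUnitary : Matrix.unitaryGroup (Fin n) ℝ).1 with hU
      have hUU : star U * U = 1 := Unitary.coe_star_mul_self _
      have hUU' : U * star U = 1 := Unitary.coe_mul_star_self _
      set s := hS.1.eigenvalues with hs
      have hspec : S = U * Matrix.diagonal s * star U := by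
        have := hS.1.spectral_theorem
        rw [Unitary.conjStarAlgAut_apply] at this
        simpa [Function.comp_def] using this
      set B := star U * A * U with hB
      have hB1 : ∀ j, lam ≤ B j j := by
        intro j
        have h1 := (hA1.conjTranspose_mul_mul_same U).diag_nonneg (i := j)
        have h2 : U.conjTranspose * (A - lam • 1) * U = B - lam • 1 := by
          rw [hB, Matrix.mul_sub, Matrix.sub_mul]
          simp only [Matrix.mul_smul, Matrix.smul_mul, Matrix.mul_one]
          rw [← hUU]; rfl
        rw [h2] at h1
        simpa using h1
      have hB2 : ∀ j, B j j ≤ Lam := by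
        intro j
        have h1 := (hA2.conjTranspose_mul_mul_same U).diag_nonneg (i := j)
        have h2 : U.conjTranspose * (Lam • 1 - A) * U = Lam • 1 - B := by
          rw [hB, Matrix.mul_sub, Matrix.sub_mul]
          simp only [Matrix.mul_smul, Matrix.smul_mul, Matrix.mul_one]
          rw [← hUU]; rfl
        rw [h2] at h1
        simpa using h1
      have htr : (A * (S - k • 1)).trace = ∑ j, B j j * (s j - k) := by
        have e1 : S - k • 1 = U * Matrix.diagonal (fun j => s j - k) * star U := by
          have : Matrix.diagonal (fun j => s j - k) = Matrix.diagonal s - k • 1 := by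
            ext a b; by_cases hab : a = b <;> simp [Matrix.diagonal, hab]
          rw [this, Matrix.mul_sub, Matrix.sub_mul, ← hspec]
          simp only [Matrix.mul_smul, Matrix.smul_mul, Matrix.mul_one, hUU']
        rw [e1, ← Matrix.mul_assoc, Matrix.trace_mul_comm, ← Matrix.mul_assoc, ← Matrix.mul_assoc,
          ← hB]
        simp [Matrix.trace, Matrix.mul_diagonal]
      rw [htr, ← Finset.add_sum_erase _ _ (Finset.mem_univ i)]
      have h3 : ∑ j ∈ Finset.univ.erase i, (-(k * Lam)) ≤
          ∑ j ∈ Finset.univ.erase i, B j j * (s j - k) := by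
        apply Finset.sum_le_sum
        intro j _
        have := hS.eigenvalues_nonneg j
        have h4 := hB1 j
        have h5 := hB2 j
        change 0 ≤ s j at this
        nlinarith [mul_nonneg (hlam.le.trans h4) this]
      have h6 : ∑ j ∈ Finset.univ.erase i, (-(k * Lam)) = -(((n : ℝ) - 1) * (k * Lam)) := by
        rw [Finset.sum_const, Finset.card_erase_of_mem (Finset.mem_univ i), Finset.card_univ,
          Fintype.card_fin, nsmul_eq_mul, Nat.cast_sub i.pos]
        push_cast; ring
      rw [h6] at h3
      have h7 : lam * (s i - k) ≤ B i i * (s i - k) :=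
        mul_le_mul_of_nonneg_right (hB1 i) (by linarith)
      linarith
  have := hmain.trans h
  linarith

theorem det_le_of_pucci {n : ℕ} (lam Lam K : ℝ) (hlam : 0 < lam) (hLam : lam ≤ Lam)
    (S : Matrix (Fin n) (Fin n) ℝ) (hS : S.PosSemidef) (hK : 0 < K)
    (h : ∀ k > K, pucciInf lam Lam (S - k • 1) ≤ 0) :
    |S.det| ≤ (K * (lam + ((n : ℝ) - 1) * Lam) / lam) ^ n := by
  have he : ∀ i, hS.1.eigenvalues i ≤ K * (lam + ((n : ℝ) - 1) * Lam) / lam := by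
    intro i
    have hn : (1 : ℝ) ≤ n := by
      have := i.pos
      exact_mod_cast this
    have hpos : 0 < lam + ((n : ℝ) - 1) * Lam := by nlinarith
    rw [le_div_iff₀ hlam]
    have : hS.1.eigenvalues i * lam / (lam + ((n : ℝ) - 1) * Lam) ≤ K := by
      apply le_of_forall_gt_imp_ge_of_dense
      intro k hk
      rw [div_le_iff₀ hpos]
      have := pucci_lower lam Lam k hlam hLam (hK.trans hk) S hS (h k hk) i
      linarith
    rwa [div_le_iff₀ hpos] at this
  have hdet : S.det = ∏ i, hS.1.eigenvalues i := by
    simpa using hS.1.det_eq_prod_eigenvalues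
  rw [abs_of_nonneg hS.det_nonneg, hdet]
  calc ∏ i, hS.1.eigenvalues i ≤ ∏ _i : Fin n, (K * (lam + ((n : ℝ) - 1) * Lam) / lam) :=
        Finset.prod_le_prod (fun i _ => hS.eigenvalues_nonneg i) (fun i _ => he i)
    _ = _ := by rw [Finset.prod_const, Finset.card_univ, Fintype.card_fin]

theorem hasFDerivAt_quad {n : ℕ} (L : Euc n →L[ℝ] Euc n)
    (hL : ∀ x y, ⟪L x, y⟫_ℝ = ⟪L y, x⟫_ℝ) (q z₀ z : Euc n) :
    HasFDerivAt (fun z => ⟪q, z - z₀⟫_ℝ + 1 / 2 * ⟪L (z - z₀), z - z₀⟫_ℝ)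
      (innerSL ℝ (q + L (z - z₀))) z := by
  have h0 : HasFDerivAt (fun z : Euc n => z - z₀) (ContinuousLinearMap.id ℝ (Euc n)) z :=
    (hasFDerivAt_id z).sub_const z₀
  have h1 : HasFDerivAt (fun z : Euc n => L (z - z₀)) L z := by
    have := L.hasFDerivAt.comp z h0
    rwa [ContinuousLinearMap.comp_id] at this
  have h2 := (hasFDerivAt_const q z).inner ℝ h0
  have h3 := (h1.inner ℝ h0).const_mul (1 / 2 : ℝ)
  refine (h2.add h3).congr_fderiv ?_
  ext w
  simp only [ContinuousLinearMap.add_apply, ContinuousLinearMap.smul_apply,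
    ContinuousLinearMap.comp_apply, ContinuousLinearMap.prod_apply, fderivInnerCLM_apply,
    ContinuousLinearMap.zero_apply, ContinuousLinearMap.id_apply, innerSL_apply_apply,
    inner_add_left, inner_zero_left, smul_eq_mul]
  rw [hL w (z - z₀)]
  ring

theorem hessian_quad {n : ℕ} (L : Euc n →L[ℝ] Euc n)
    (hL : ∀ x y, ⟪L x, y⟫_ℝ = ⟪L y, x⟫_ℝ) (q z₀ z : Euc n) :
    hessianMatrix (fun z => ⟪q, z - z₀⟫_ℝ + 1 / 2 * ⟪L (z - z₀), z - z₀⟫_ℝ) z =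
      LinearMap.toMatrix (EuclideanSpace.basisFun (Fin n) ℝ).toBasis
        (EuclideanSpace.basisFun (Fin n) ℝ).toBasis (L : Euc n →ₗ[ℝ] Euc n) := by
  have h1 : fderiv ℝ (fun z => ⟪q, z - z₀⟫_ℝ + 1 / 2 * ⟪L (z - z₀), z - z₀⟫_ℝ) =
      fun z => innerSL ℝ (q + L (z - z₀)) := by
    funext y
    exact (hasFDerivAt_quad L hL q z₀ y).fderiv
  have h2 : HasFDerivAt (fun z => innerSL ℝ (q + L (z - z₀)))
      ((innerSL ℝ (E := Euc n)).comp L) z := by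
    have h0 : HasFDerivAt (fun z : Euc n => q + L (z - z₀)) L z := by
      have h0 : HasFDerivAt (fun z : Euc n => z - z₀) (ContinuousLinearMap.id ℝ (Euc n)) z :=
        (hasFDerivAt_id z).sub_const z₀
      have := (L.hasFDerivAt.comp z h0).const_add q
      rwa [ContinuousLinearMap.comp_id] at this
    exact (innerSL ℝ (E := Euc n)).hasFDerivAt.comp z h0
  ext i j
  simp only [hessianMatrix, Matrix.of_apply]
  rw [iteratedFDeriv_two_apply, h1, h2.fderiv]
  simp [LinearMap.toMatrix_apply]
  rw [hL, EuclideanSpace.inner_single_right]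
  simp

theorem taylor_lower {n : ℕ} (e : Euc n → ℝ) (p : Euc n → Euc n) (x₀ : Euc n)
    (T : Euc n →L[ℝ] Euc n) (he : ∀ x, HasFDerivAt e (innerSL ℝ (p x)) x)
    (hp : HasFDerivAt p T x₀) (hT : ∀ x y, ⟪T x, y⟫_ℝ = ⟪T y, x⟫_ℝ) (η : ℝ) (hη : 0 < η) :
    ∀ᶠ x in nhds x₀, e x₀ + (⟪p x₀, x - x₀⟫_ℝ + 1 / 2 * ⟪T (x - x₀), x - x₀⟫_ℝ)
      - η * ‖x - x₀‖ ^ 2 ≤ e x := by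
  have h1 := (hasFDerivAt_iff_isLittleO.mp hp).bound hη
  obtain ⟨δ, hδ, hb⟩ := Metric.eventually_nhds_iff_ball.mp h1
  refine Metric.eventually_nhds_iff_ball.mpr ⟨δ, hδ, fun x hx => ?_⟩
  set D : Euc n → ℝ := fun x => e x - (⟪p x₀, x - x₀⟫_ℝ + 1 / 2 * ⟪T (x - x₀), x - x₀⟫_ℝ) with hD
  have hDd : ∀ y, HasFDerivAt D (innerSL ℝ (p y - p x₀ - T (y - x₀))) y := by
    intro y
    refine ((he y).sub (hasFDerivAt_quad T hT (p x₀) x₀ y)).congr_fderiv ?_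
    rw [← map_sub]
    congr 1
    abel
  have hmv := (convex_closedBall x₀ ‖x - x₀‖).norm_image_sub_le_of_norm_hasFDerivWithin_le
    (f := D) (C := η * ‖x - x₀‖) (x := x₀) (y := x)
    (fun y _ => (hDd y).hasFDerivWithinAt) (fun y hy => by
      rw [innerSL_apply_norm]
      have hy' : ‖y - x₀‖ ≤ ‖x - x₀‖ := by simpa [dist_eq_norm] using hy
      have hyb : y ∈ ball x₀ δ := by
        rw [mem_ball, dist_eq_norm] at hx ⊢
        exact lt_of_le_of_lt hy' hx
      exact (hb y hyb).trans (mul_le_mul_of_nonneg_left hy' hη.le))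
    (by simp) (by simp [dist_eq_norm])
  have h2 := neg_le_of_abs_le hmv
  simp only [hD, sub_self, inner_zero_right, mul_zero, add_zero, sub_zero] at h2
  linarith

theorem det_bound {n : ℕ} (lam Lam : ℝ) (hlam : 0 < lam) (hLam : lam ≤ Lam)
    (Ω : Set (Euc n)) (v : Euc n → ℝ) (hsuper : ViscSupersol lam Lam Ω v)
    (e : Euc n → ℝ) (p : Euc n → Euc n) (x₀ z₀ : Euc n) (C : ℝ)
    (T : Euc n →L[ℝ] Euc n) (he : ∀ x, HasFDerivAt e (innerSL ℝ (p x)) x)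
    (hp : HasFDerivAt p T x₀) (hmono : ∀ x y, 0 ≤ ⟪p x - p y, x - y⟫_ℝ)
    (hz₀ : z₀ ∈ Ω)
    (hle : ∀ z ∈ Ω, e (z + (x₀ - z₀)) ≤ v z + 16 * ‖z‖ ^ 2 + C)
    (heq : e x₀ = v z₀ + 16 * ‖z₀‖ ^ 2 + C) :
    |T.det| ≤ (32 * (lam + ((n : ℝ) - 1) * Lam) / lam) ^ n := by
  have hT : ∀ x y, ⟪T x, y⟫_ℝ = ⟪T y, x⟫_ℝ := by
    intro x y
    have h2 : HasFDerivAt (fun z => innerSL ℝ (p z)) ((innerSL ℝ (E := Euc n)).comp T) x₀ :=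
      (innerSL ℝ (E := Euc n)).hasFDerivAt.comp x₀ hp
    simpa using second_derivative_symmetric he h2 x y
  have hpos : ∀ h, 0 ≤ ⟪T h, h⟫_ℝ := by
    intro h
    have h1 : HasDerivAt (fun t : ℝ => p (x₀ + t • h)) (T h) 0 := by
      have := hp.hasLineDerivAt h
      exact this
    have h2 := h1.tendsto_slope_zero_right
    have h3 : Filter.Tendsto (fun t : ℝ => ⟪t⁻¹ • (p (x₀ + (0 + t) • h) - p (x₀ + (0 : ℝ) • h)), h⟫_ℝ)
      (nhdsWithin 0 (Set.Ioi 0)) (nhds ⟪T h, h⟫_ℝ) := h2.inner tendsto_const_nhds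
    refine ge_of_tendsto h3 ?_
    filter_upwards [self_mem_nhdsWithin] with t ht
    have ht : 0 < t := ht
    have h4 := hmono (x₀ + t • h) x₀
    rw [add_sub_cancel_left, real_inner_smul_right] at h4
    rw [real_inner_smul_left, zero_add, zero_smul, add_zero]
    have h5 : 0 ≤ ⟪p (x₀ + t • h) - p x₀, h⟫_ℝ := nonneg_of_mul_nonneg_right h4 ht
    positivity
  set b := (EuclideanSpace.basisFun (Fin n) ℝ).toBasis with hb
  set S := LinearMap.toMatrix b b (T : Euc n →ₗ[ℝ] Euc n) with hSdef
  have hSsym : (T : Euc n →ₗ[ℝ] Euc n).IsPositive := by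
    refine ⟨fun x y => ?_, fun x => ?_⟩
    · have := hT x y
      rwa [real_inner_comm x (T y)] at this
    · exact hpos x
  have hS : S.PosSemidef := by
    exact (LinearMap.posSemidef_toMatrix_iff (EuclideanSpace.basisFun (Fin n) ℝ)).mpr hSsym
  have hdet : T.det = S.det := by
    rw [hSdef, LinearMap.det_toMatrix]
  rw [hdet]
  refine det_le_of_pucci lam Lam 32 hlam hLam S hS (by norm_num) ?_
  intro k hk
  have hL : ∀ x y, ⟪(T - k • ContinuousLinearMap.id ℝ (Euc n)) x, y⟫_ℝ =
      ⟪(T - k • ContinuousLinearMap.id ℝ (Euc n)) y, x⟫_ℝ := by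
    intro x y
    simp only [ContinuousLinearMap.sub_apply, ContinuousLinearMap.smul_apply,
      ContinuousLinearMap.id_apply, inner_sub_left, real_inner_smul_left]
    rw [hT x y, real_inner_comm x y]
  have hhess := hessian_quad (T - k • ContinuousLinearMap.id ℝ (Euc n)) hL
    (p x₀ - (32 : ℝ) • z₀) z₀ z₀
  have hmat : LinearMap.toMatrix b b
      ((T - k • ContinuousLinearMap.id ℝ (Euc n) : Euc n →L[ℝ] Euc n) : Euc n →ₗ[ℝ] Euc n) =
      S - k • 1 := by
    rw [ContinuousLinearMap.toLinearMap_sub, ContinuousLinearMap.toLinearMap_smul, map_sub,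
      map_smul, ContinuousLinearMap.coe_id, LinearMap.toMatrix_id]
  rw [hmat] at hhess
  rw [← hhess]
  apply hsuper z₀ hz₀
  · refine ⟨Set.univ, isOpen_univ, Set.mem_univ _, ?_⟩
    apply ContDiff.contDiffOn
    have h1 : ContDiff ℝ 2 (fun z : Euc n => z - z₀) := by fun_prop
    have h2 : ContDiff ℝ 2 (fun z : Euc n =>
        (T - k • ContinuousLinearMap.id ℝ (Euc n)) (z - z₀)) := by fun_prop
    exact (contDiff_const.inner ℝ h1).add (contDiff_const.mul (h2.inner ℝ h1))
  · have hty := taylor_lower e p x₀ T he hp hT ((k - 32) / 2) (by linarith)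
    have hcont : Filter.Tendsto (fun z : Euc n => z + (x₀ - z₀)) (nhds z₀) (nhds x₀) := by
      have : Continuous (fun z : Euc n => z + (x₀ - z₀)) := by fun_prop
      simpa using this.tendsto z₀
    have h1 := hcont.eventually hty
    have h2 : ∀ᶠ z in nhdsWithin z₀ Ω, z ∈ Ω := self_mem_nhdsWithin
    have h3 := h2.and (h1.filter_mono nhdsWithin_le_nhds)
    refine Filter.Eventually.mono h3 ?_
    rintro z ⟨hzΩ, hz⟩
    have h4 := hle z hzΩ
    have e1 : z + (x₀ - z₀) - x₀ = z - z₀ := by abel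
    rw [e1] at hz
    have e2 : ‖z‖ ^ 2 = ‖z₀‖ ^ 2 + 2 * ⟪z₀, z - z₀⟫_ℝ + ‖z - z₀‖ ^ 2 := by
      rw [← norm_add_sq_real]; simp
    simp only [ContinuousLinearMap.sub_apply, ContinuousLinearMap.smul_apply,
      ContinuousLinearMap.id_apply, inner_sub_left (𝕜 := ℝ) (p x₀), inner_sub_left (𝕜 := ℝ) (T _),
      real_inner_smul_left, sub_self, inner_zero_right, real_inner_self_eq_norm_sq]
    nlinarith

theorem volume_image_null {n : ℕ} (p : Euc n → Euc n) (K : NNReal) (hp : LipschitzWith K p)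
    (s : Set (Euc n)) (hs : volume s = 0) : volume (p '' s) = 0 := by
  have h1 : (volume : Measure (Euc n)) ≪ Measure.hausdorffMeasure (Module.finrank ℝ (Euc n)) :=
    Measure.absolutelyContinuous_isAddHaarMeasure _ _
  have h2 : Measure.hausdorffMeasure (Module.finrank ℝ (Euc n)) ≪ (volume : Measure (Euc n)) :=
    Measure.absolutelyContinuous_isAddHaarMeasure _ _
  apply h1
  have h3 := hp.hausdorffMeasure_image_le (d := Module.finrank ℝ (Euc n)) (by positivity) s
  rw [h2 hs, mul_zero] at h3
  exact le_antisymm h3 zero_le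

theorem volume_bound {n : ℕ} (lam Lam : ℝ) (hlam : 0 < lam) (hLam : lam ≤ Lam)
    (Ω : Set (Euc n)) (v : Euc n → ℝ) (hsuper : ViscSupersol lam Lam Ω v)
    (g : Euc n → ℝ) (hg : ∀ x, g x = v x + 16 * ‖x‖ ^ 2) (R : ℝ) (hR : 0 ≤ R)
    (C : Set (Euc n × Euc n)) (hC : IsCompact C) (hCne : C.Nonempty)
    (hCΩ : ∀ c ∈ C, c.1 ∈ Ω) (hCR : ∀ c ∈ C, ‖c.2‖ ≤ R)
    (hCg : ∀ c ∈ C, ∀ x ∈ Ω, g c.1 + ⟪c.2, x - c.1⟫_ℝ ≤ g x)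
    (hCcont : ContinuousOn (fun c : Euc n × Euc n => g c.1) C) :
    volume (Prod.snd '' C) ≤
      ENNReal.ofReal ((32 * (lam + ((n : ℝ) - 1) * Lam) / lam) ^ n) *
        volume (Prod.fst '' C) := by
  set Z := Prod.fst '' C with hZ
  have hZc : IsCompact Z := hC.image continuous_fst
  have : Nonempty C := hCne.to_subtype
  obtain ⟨f, hf⟩ : ∃ f : Euc n → ℝ, ∀ x, f x = ⨆ c : C, (g c.1.1 + ⟪c.1.2, x - c.1.1⟫_ℝ) :=
    ⟨_, fun _ => rfl⟩
  have hbdd : ∀ x, BddAbove (Set.range fun c : C => (g c.1.1 + ⟪c.1.2, x - c.1.1⟫_ℝ)) := by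
    intro x
    have hcont : ContinuousOn (fun c : Euc n × Euc n => g c.1 + ⟪c.2, x - c.1⟫_ℝ) C :=
      hCcont.add (Continuous.continuousOn (by fun_prop))
    have := (hC.image_of_continuousOn hcont).bddAbove
    rwa [Set.image_eq_range] at this
  have hfge : ∀ c ∈ C, ∀ x, g c.1 + ⟪c.2, x - c.1⟫_ℝ ≤ f x := by
    intro c hc x
    rw [hf]
    exact le_ciSup (hbdd x) ⟨c, hc⟩
  have hfle : ∀ x a, (∀ c ∈ C, g c.1 + ⟪c.2, x - c.1⟫_ℝ ≤ a) → f x ≤ a := by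
    intro x a h
    rw [hf]
    exact ciSup_le fun c => h c.1 c.2
  have hfg : ∀ x ∈ Ω, f x ≤ g x := fun x hx => hfle x _ fun c hc => hCg c hc x hx
  have hgf : ∀ c ∈ C, f c.1 = g c.1 := by
    intro c hc
    refine le_antisymm (hfg _ (hCΩ c hc)) ?_
    simpa using hfge c hc c.1
  have hlip : ∀ x y, f x - f y ≤ R * ‖x - y‖ := by
    intro x y
    rw [sub_le_iff_le_add]
    apply hfle
    intro c hc
    have h1 := hfge c hc y
    have h2 : ⟪c.2, x - c.1⟫_ℝ = ⟪c.2, x - y⟫_ℝ + ⟪c.2, y - c.1⟫_ℝ := by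
      rw [← inner_add_right]; simp
    have h3 := real_inner_le_norm c.2 (x - y)
    have h4 := mul_le_mul_of_nonneg_right (hCR c hc) (norm_nonneg (x - y))
    linarith
  have hconv : ConvexOn ℝ Set.univ f := by
    refine ⟨convex_univ, ?_⟩
    intro x _ y _ a b ha hb hab
    apply hfle
    intro c hc
    have h1 := mul_le_mul_of_nonneg_left (hfge c hc x) ha
    have h2 := mul_le_mul_of_nonneg_left (hfge c hc y) hb
    have h3 : a • x + b • y - c.1 = a • (x - c.1) + b • (y - c.1) := by
      have : c.1 = (a + b) • c.1 := by rw [hab, one_smul]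
      nth_rw 1 [this]
      module
    rw [h3, inner_add_right, real_inner_smul_right, real_inner_smul_right]
    have h4 : g c.1 = a * g c.1 + b * g c.1 := by rw [← add_mul, hab, one_mul]
    simp only [smul_eq_mul]
    linarith
  set M := (32 * (lam + ((n : ℝ) - 1) * Lam) / lam) ^ n with hM
  have key : ∀ τ : ℝ, 0 < τ → volume (Prod.snd '' C) ≤
      ENNReal.ofReal M * volume (Metric.cthickening (R / τ) Z) := by
    intro τ hτ
    obtain ⟨e, p, he1, he2, hsub, hpR, hmono, hpl, hder, hsurj⟩ := moreau f R τ hτ hR hconv hlip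
    set s := {x : Euc n | x - τ⁻¹ • p x ∈ Z} with hs
    have hscl : IsClosed s := by
      have : Continuous (fun x => x - τ⁻¹ • p x) := by
        have := hpl.continuous
        fun_prop
      exact hZc.isClosed.preimage this
    have hQ : Prod.snd '' C ⊆ p '' s := by
      rintro q ⟨c, hc, rfl⟩
      have h1 : p (c.1 + τ⁻¹ • c.2) = c.2 := by
        apply hsurj
        intro w
        rw [hgf c hc]
        exact hfge c hc w
      refine ⟨c.1 + τ⁻¹ • c.2, ?_, h1⟩
      simp only [hs, Set.mem_ofPred_eq, h1]
      exact ⟨c, hc, by simp⟩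
    have hsthick : s ⊆ Metric.cthickening (R / τ) Z := by
      intro x hx
      have hxZ : x - τ⁻¹ • p x ∈ Z := hx
      refine Metric.mem_cthickening_of_dist_le x _ _ _ hxZ ?_
      rw [dist_eq_norm, sub_sub_cancel, norm_smul, norm_inv, Real.norm_of_nonneg hτ.le,
        inv_mul_eq_div]
      exact div_le_div_of_nonneg_right (hpR x) hτ.le
    set N := {x : Euc n | DifferentiableAt ℝ p x} with hN
    have hNm : MeasurableSet N := measurableSet_of_differentiableAt ℝ p
    have hNnull : volume (s \ N) = 0 := by
      have h1 : ∀ᵐ x, DifferentiableAt ℝ p x := hpl.ae_differentiableAt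
      exact measure_mono_null (fun x hx => hx.2) (ae_iff.mp h1)
    have hdet : ∀ x ∈ s ∩ N, |(fderiv ℝ p x).det| ≤ M := by
      rintro x ⟨hx, hxN⟩
      have hxs : x - τ⁻¹ • p x ∈ Z := hx
      obtain ⟨c, hc, hcx⟩ := hxs
      have hd : x - (x - τ⁻¹ • p x) = τ⁻¹ • p x := by abel
      apply det_bound lam Lam hlam hLam Ω v hsuper e p x (x - τ⁻¹ • p x)
        (τ / 2 * ‖τ⁻¹ • p x‖ ^ 2) _ hder (DifferentiableAt.hasFDerivAt hxN) hmono
      · rw [← hcx]; exact hCΩ c hc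
      · intro z hz
        have h1 := he1 (z + (x - (x - τ⁻¹ • p x))) z
        rw [hd, add_sub_cancel_left] at h1
        have h2 := hfg z hz
        rw [hg] at h2
        rw [hd]
        linarith
      · rw [he2 x, ← hg, ← hcx, hgf c hc]
    calc volume (Prod.snd '' C) ≤ volume (p '' s) := measure_mono hQ
      _ ≤ volume (p '' (s ∩ N) ∪ p '' (s \ N)) := by
          rw [← Set.image_union, Set.inter_union_diff]
      _ ≤ volume (p '' (s ∩ N)) + volume (p '' (s \ N)) := measure_union_le _ _
      _ = volume (p '' (s ∩ N)) := by rw [volume_image_null p _ hpl _ hNnull, add_zero]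
      _ ≤ ∫⁻ x in s ∩ N, ENNReal.ofReal |(fderiv ℝ p x).det| :=
          addHaar_image_le_lintegral_abs_det_fderiv volume (hscl.measurableSet.inter hNm)
            (fun x hx => (DifferentiableAt.hasFDerivAt hx.2).hasFDerivWithinAt)
      _ ≤ ∫⁻ x in s ∩ N, ENNReal.ofReal M :=
          setLIntegral_mono measurable_const fun x hx => ENNReal.ofReal_le_ofReal (hdet x hx)
      _ = ENNReal.ofReal M * volume (s ∩ N) := by rw [setLIntegral_const]
      _ ≤ ENNReal.ofReal M * volume (Metric.cthickening (R / τ) Z) := by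
          gcongr
          exact Set.inter_subset_left.trans hsthick
  have hlim : Filter.Tendsto (fun τ : ℝ => ENNReal.ofReal M *
      volume (Metric.cthickening (R / τ) Z)) Filter.atTop
      (nhds (ENNReal.ofReal M * volume Z)) := by
    apply ENNReal.Tendsto.const_mul _ (Or.inr ENNReal.ofReal_ne_top)
    have h1 := tendsto_measure_cthickening_of_isCompact (μ := (volume : Measure (Euc n))) hZc
    exact h1.comp (tendsto_const_nhds.div_atTop Filter.tendsto_id)
  refine ge_of_tendsto hlim ?_
  filter_upwards [Filter.eventually_gt_atTop 0] with τ hτ using key τ hτ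

theorem volume_cube {n : ℕ} (r : ℝ) : volume (cube r (0 : Euc n)) = ENNReal.ofReal r ^ n := by
  have h1 : cube r (0 : Euc n) =
      WithLp.ofLp ⁻¹' (Set.univ.pi fun _ : Fin n => Set.Ioo (-(r / 2)) (r / 2)) := by
    ext y
    simp [cube, abs_lt]
  rw [h1, (PiLp.volume_preserving_ofLp (Fin n)).measure_preimage
    (MeasurableSet.univ_pi fun _ => measurableSet_Ioo).nullMeasurableSet, Real.volume_pi_Ioo]
  simp

theorem volume_affine {n : ℕ} (p : Euc n) (s : Set (Euc n)) :
    volume ((fun y => p + (32 : ℝ) • y) '' s) = ENNReal.ofReal (32 ^ n) * volume s := by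
  have h1 : (fun y => p + (32 : ℝ) • y) '' s = (fun x => p + x) '' ((fun y => (32 : ℝ) • y) '' s) := by
    rw [Set.image_image]
  rw [h1, Set.image_add_left, measure_preimage_add, Set.image_smul, Measure.addHaar_smul]
  simp

theorem norm_le_of_cube {n : ℕ} (hn : 2 ≤ n) (y : Euc n)
    (hy : y ∈ cube (1 / (4 * Real.sqrt n)) (0 : Euc n)) : ‖y‖ ≤ 1 / 8 := by
  have hn0 : (0 : ℝ) < n := by positivity
  rw [EuclideanSpace.norm_eq]
  apply Real.sqrt_le_iff.mpr ⟨by norm_num, ?_⟩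
  calc ∑ i, ‖y i‖ ^ 2 ≤ ∑ _i : Fin n, (1 / (64 * (n : ℝ))) := by
        apply Finset.sum_le_sum
        intro i _
        have h1 := hy i
        simp only [PiLp.zero_apply, sub_zero] at h1
        rw [Real.norm_eq_abs]
        have h2 : |y i| ^ 2 ≤ (1 / (4 * Real.sqrt n) / 2) ^ 2 :=
          pow_le_pow_left₀ (abs_nonneg _) h1.le 2
        refine h2.trans (le_of_eq ?_)
        have := Real.sq_sqrt hn0.le
        rw [div_pow, div_pow, mul_pow, this]
        field_simp
        norm_num
    _ = (1 / 8) ^ 2 := by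
        rw [Finset.sum_const, Finset.card_univ, Fintype.card_fin, nsmul_eq_mul]
        field_simp
        norm_num

theorem closedBall_sub_cube {n : ℕ} (y : Euc n) (hy : ‖y‖ ≤ 9 / 20) (r : ℝ) (hr : 1 ≤ r) :
    y ∈ cube r (0 : Euc n) := by
  intro i
  have h1 : ‖y i‖ ≤ ‖y‖ := PiLp.norm_apply_le y i
  rw [Real.norm_eq_abs] at h1
  simp only [PiLp.zero_apply, sub_zero]
  linarith

/-- existence of a touching point -/
theorem touching {n : ℕ} (hn : 2 ≤ n) (Ω : Set (Euc n)) (v g : Euc n → ℝ)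
    (hB : closedBall (0 : Euc n) (9 / 20) ⊆ Ω) (hv : ContinuousOn v Ω)
    (hg : ∀ x, g x = v x + 16 * ‖x‖ ^ 2) (xb p y : Euc n) (hxb : ‖xb‖ ≤ 1 / 8) (hy : ‖y‖ ≤ 1 / 8)
    (hp : ∀ x ∈ Ω, v x ≥ v xb + ⟪p, x - xb⟫_ℝ - (1 / n : ℝ) / 2 * ‖x - xb‖ ^ 2) :
    ∃ z ∈ closedBall (0 : Euc n) (9 / 20), ∀ x ∈ Ω,
      g z + ⟪p + (32 : ℝ) • y, x - z⟫_ℝ ≤ g x := by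
  set F : Euc n → ℝ := fun x => v x - ⟪p, x⟫_ℝ + 16 * ‖x - y‖ ^ 2 with hF
  have hFc : ContinuousOn F (closedBall 0 (9 / 20)) := by
    refine ((hv.mono hB).sub (Continuous.continuousOn (by fun_prop))).add
      (Continuous.continuousOn (by fun_prop))
  have hxbB : xb ∈ closedBall (0 : Euc n) (9 / 20) := by
    rw [mem_closedBall_zero_iff]; linarith
  obtain ⟨z, hz, hzm⟩ := (isCompact_closedBall (0 : Euc n) (9 / 20)).exists_isMinOn ⟨xb, hxbB⟩ hFc
  refine ⟨z, hz, fun x hx => ?_⟩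
  have hFz : F z ≤ F x := by
    by_cases hxB : x ∈ closedBall (0 : Euc n) (9 / 20)
    · exact hzm hxB
    · have h1 : F z ≤ F xb := hzm hxbB
      refine h1.trans ?_
      rw [mem_closedBall_zero_iff, not_le] at hxB
      have h2 := hp x hx
      rw [inner_sub_right] at h2
      simp only [hF]
      have hn' : (2 : ℝ) ≤ n := by exact_mod_cast hn
      have hn2 : (1 / n : ℝ) / 2 ≤ 1 / 4 := by
        rw [div_div, div_le_div_iff₀ (by positivity) (by norm_num)]; linarith
      have h3 : ‖xb - y‖ ≤ 1 / 4 := (norm_sub_le _ _).trans (by linarith)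
      have h4 : 13 / 40 ≤ ‖x - y‖ := by
        have := norm_sub_norm_le x y
        linarith
      have h5 : ‖x - xb‖ ≤ ‖x - y‖ + 1 / 4 := by
        have := norm_sub_le_norm_sub_add_norm_sub x y xb
        rw [norm_sub_rev y xb] at this
        linarith
      have h6 : ‖x - xb‖ ^ 2 ≤ (‖x - y‖ + 1 / 4) ^ 2 := pow_le_pow_left₀ (norm_nonneg _) h5 2
      have h7 : ‖xb - y‖ ^ 2 ≤ (1 / 4) ^ 2 := pow_le_pow_left₀ (norm_nonneg _) h3 2
      have h8 : (1 / n : ℝ) / 2 * ‖x - xb‖ ^ 2 ≤ 1 / 4 * ‖x - xb‖ ^ 2 :=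
        mul_le_mul_of_nonneg_right hn2 (sq_nonneg _)
      nlinarith
  simp only [hF] at hFz
  rw [hg, hg, inner_add_left, real_inner_smul_left, inner_sub_right, inner_sub_right]
  rw [norm_sub_sq_real, norm_sub_sq_real, real_inner_comm y z, real_inner_comm y x] at hFz
  linarith

/-- measure estimate for viscosity supersolutions with explicit σ. -/
theorem stmt_4 (n : ℕ) (hn : 2 ≤ n) (lam Lam : ℝ) (hlam : 0 < lam) (hLam : lam ≤ Lam)
    (Ω : Set (Euc n)) (hΩ : IsOpen Ω) (hQ : closure (cube 2 0) ⊆ Ω)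
    (v : Euc n → ℝ) (hv : ContinuousOn v Ω) (hsuper : ViscSupersol lam Lam Ω v)
    (hne : (Gm (1 / n) v Ω ∩ cube (1 / (4 * Real.sqrt n)) 0).Nonempty) :
    ENNReal.ofReal
        ((1 - (1 - (lam / (lam + ((n : ℝ) - 1) * Lam)) ^ n * (1 / (4 * Real.sqrt n)) ^ n))) *
        volume (cube (1 : ℝ) (0 : Euc n)) ≤
      volume (Gm 32 v Ω ∩ cube 1 0) := by
  obtain ⟨xb, ⟨hxbΩ, p, hp⟩, hxbc⟩ := hne
  have hB : closedBall (0 : Euc n) (9 / 20) ⊆ Ω := by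
    intro x hx
    apply hQ
    apply subset_closure
    exact closedBall_sub_cube x (by simpa using hx) 2 (by norm_num)
  obtain ⟨g, hg⟩ : ∃ g : Euc n → ℝ, ∀ x, g x = v x + 16 * ‖x‖ ^ 2 := ⟨_, fun _ => rfl⟩
  set r : ℝ := 1 / (4 * Real.sqrt n) with hr
  have hr0 : 0 < r := by positivity
  set R : ℝ := ‖p‖ + 4 with hR
  have htouch : ∀ y ∈ cube r (0 : Euc n), ∃ z ∈ closedBall (0 : Euc n) (9 / 20), ∀ x ∈ Ω,
      g z + ⟪p + (32 : ℝ) • y, x - z⟫_ℝ ≤ g x := fun y hy =>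
    touching hn Ω v g hB hv hg xb p y (norm_le_of_cube hn xb hxbc) (norm_le_of_cube hn y hy) hp
  set K : Set (Euc n × Euc n) := closedBall (0 : Euc n) (9 / 20) ×ˢ closedBall (0 : Euc n) R with hK
  have hKc : IsCompact K := (isCompact_closedBall _ _).prod (isCompact_closedBall _ _)
  have hgc : ContinuousOn g (closedBall (0 : Euc n) (9 / 20)) := by
    have : g = fun x => v x + 16 * ‖x‖ ^ 2 := funext hg
    rw [this]
    exact (hv.mono hB).add (Continuous.continuousOn (by fun_prop))
  have hgK : ContinuousOn (fun c : Euc n × Euc n => g c.1) K :=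
    hgc.comp continuous_fst.continuousOn fun c hc => hc.1
  set C : Set (Euc n × Euc n) :=
    K ∩ ⋂ x ∈ Ω, (K ∩ (fun c : Euc n × Euc n => g c.1 + ⟪c.2, x - c.1⟫_ℝ) ⁻¹' Set.Iic (g x)) with hC
  have hCc : IsCompact C := by
    refine hKc.inter_right (isClosed_biInter fun x _ => ?_)
    refine ContinuousOn.preimage_isClosed_of_isClosed ?_ hKc.isClosed isClosed_Iic
    exact hgK.add (Continuous.continuousOn (by fun_prop))
  have hCmem : ∀ c ∈ C, ∀ x ∈ Ω, g c.1 + ⟪c.2, x - c.1⟫_ℝ ≤ g x := by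
    intro c hc x hx
    have := Set.mem_iInter₂.mp hc.2 x hx
    exact this.2
  have hP : (fun y => p + (32 : ℝ) • y) '' cube r (0 : Euc n) ⊆ Prod.snd '' C := by
    rintro _ ⟨y, hy, rfl⟩
    obtain ⟨z, hz, hzx⟩ := htouch y hy
    have hKm : (z, p + (32 : ℝ) • y) ∈ K := by
      refine ⟨hz, ?_⟩
      rw [mem_closedBall_zero_iff]
      refine (norm_add_le _ _).trans ?_
      rw [norm_smul, Real.norm_of_nonneg (by norm_num)]
      have := norm_le_of_cube hn y hy
      linarith
    refine ⟨(z, p + (32 : ℝ) • y), ⟨hKm, ?_⟩, rfl⟩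
    exact Set.mem_iInter₂.mpr fun x hx => ⟨hKm, hzx x hx⟩
  have hCne : C.Nonempty := by
    have h0 : (0 : Euc n) ∈ cube r (0 : Euc n) := by
      intro i; simp; positivity
    obtain ⟨c, hc, _⟩ := hP ⟨0, h0, rfl⟩
    exact ⟨c, hc⟩
  have hmain := volume_bound lam Lam hlam hLam Ω v hsuper g hg R (by positivity) C hCc hCne
    (fun c hc => hB hc.1.1) (fun c hc => by simpa using hc.1.2) hCmem
    (hgK.mono Set.inter_subset_left)
  have hZsub : Prod.fst '' C ⊆ Gm 32 v Ω ∩ cube 1 0 := by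
    rintro _ ⟨c, hc, rfl⟩
    refine ⟨⟨hB hc.1.1, c.2 - (32 : ℝ) • c.1, fun x hx => ?_⟩,
      closedBall_sub_cube _ (by simpa using hc.1.1) 1 le_rfl⟩
    have h1 := hCmem c hc x hx
    rw [hg, hg] at h1
    rw [inner_sub_left, real_inner_smul_left]
    have e2 : ‖x‖ ^ 2 = ‖c.1‖ ^ 2 + 2 * ⟪c.1, x - c.1⟫_ℝ + ‖x - c.1‖ ^ 2 := by
      rw [← norm_add_sq_real]; simp
    linarith
  have h1 : ENNReal.ofReal (32 ^ n) * ENNReal.ofReal r ^ n ≤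
      ENNReal.ofReal ((32 * (lam + ((n : ℝ) - 1) * Lam) / lam) ^ n) *
        volume (Gm 32 v Ω ∩ cube 1 0) := by
    rw [← volume_cube, ← volume_affine p]
    exact ((measure_mono hP).trans hmain).trans (by gcongr)
  have hn1 : (2 : ℝ) ≤ n := by exact_mod_cast hn
  have hpos : 0 < lam + ((n : ℝ) - 1) * Lam := by nlinarith
  set c := lam / (lam + ((n : ℝ) - 1) * Lam) with hc
  have hc0 : 0 < c := by positivity
  have h2 := mul_le_mul_of_nonneg_left h1
    (show 0 ≤ ENNReal.ofReal ((c / 32) ^ n) from zero_le)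
  rw [volume_cube, ENNReal.ofReal_one, one_pow, mul_one, sub_sub_cancel, ← mul_pow]
  rw [← mul_assoc, ← mul_assoc, ← ENNReal.ofReal_mul (by positivity),
    ← ENNReal.ofReal_mul (by positivity), ← ENNReal.ofReal_pow hr0.le,
    ← ENNReal.ofReal_mul (by positivity), ← mul_pow, ← mul_pow, ← mul_pow] at h2
  have e1 : c / 32 * 32 = c := by ring
  have e2 : c / 32 * (32 * (lam + ((n : ℝ) - 1) * Lam) / lam) = 1 := by
    rw [hc]; field_simp
  rw [e1, e2, one_pow, ENNReal.ofReal_one, one_mul] at h2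
  exact h2
end
end

section
/- Let n ≥ 2 be an integer and 0 < λ ≤ Λ real constants. Let Ω ⊆ ℝⁿ be an open set containing the closure of Q₂, let a : Ω → (real symmetric n×n matrices) satisfy λ·I ≤ a(x) ≤ Λ·I for every x ∈ Ω, and let v : Ω → ℝ be twice differentiable at every point of Ω (with Hessian matrix D²v(x)) and satisfy trace(a(x)·D²v(x)) ≤ 0 for every x ∈ Ω. If G⁻_{1/n}(v,Ω) ∩ Q_{1/(4√n)} ≠ ∅, then |G⁻₃₂(v,Ω) ∩ Q₁| ≥ (1−σ₁)·|Q₁|, where σ₁ := 1 − (λ/Λ)^{n−1} · (1/(4√n))^n. -/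
open MeasureTheory Metric
open scoped InnerProductSpace ENNReal

noncomputable section

/-- Hessian matrix extracted from a second-order Fréchet derivative. -/
def hessOfSecond {n : ℕ} (u'' : Euc n → (Euc n →L[ℝ] Euc n →L[ℝ] ℝ)) (x : Euc n) :
    Matrix (Fin n) (Fin n) ℝ :=
  Matrix.of fun i j => u'' x (EuclideanSpace.single i 1) (EuclideanSpace.single j 1)


theorem aux_amgm {n : ℕ} (hn : 0 < n) (z : Fin n → ℝ) (hz : ∀ i, 0 ≤ z i) :
    ∏ i, z i ≤ ((∑ i, z i) / n) ^ n := by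
  have hn' : (n : ℝ) ≠ 0 := by positivity
  have h := Real.geom_mean_le_arith_mean Finset.univ (fun _ => 1) z (by simp) (by simpa using hn)
    (fun i _ => hz i)
  simp only [Real.rpow_one, one_mul, Finset.sum_const, Finset.card_univ, Fintype.card_fin,
    nsmul_eq_mul, mul_one] at h
  have hp : 0 ≤ ∏ i, z i := Finset.prod_nonneg fun i _ => hz i
  calc ∏ i, z i = ((∏ i, z i) ^ ((n : ℝ)⁻¹)) ^ n := by
        rw [← Real.rpow_natCast, ← Real.rpow_mul hp, inv_mul_cancel₀ hn', Real.rpow_one]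
    _ ≤ _ := by gcongr

theorem aux_psd_amgm {n : ℕ} (hn : 0 < n) (M : Matrix (Fin n) (Fin n) ℝ) (hM : M.PosSemidef) :
    M.det ≤ (M.trace / n) ^ n := by
  have h1 := hM.1.det_eq_prod_eigenvalues
  have h2 := hM.1.trace_eq_sum_eigenvalues
  simp only [RCLike.ofReal_real_eq_id, id] at h1 h2
  rw [h1, h2]
  exact aux_amgm hn _ hM.eigenvalues_nonneg

open scoped MatrixOrder in
theorem aux_det_mul {n : ℕ} (hn : 0 < n) (A B : Matrix (Fin n) (Fin n) ℝ) (hA : A.PosSemidef)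
    (hB : B.PosSemidef) : A.det * B.det ≤ ((A * B).trace / n) ^ n := by
  obtain ⟨C, hC⟩ := CStarAlgebra.nonneg_iff_eq_star_mul_self.mp hA.nonneg
  rw [Matrix.star_eq_conjTranspose] at hC
  have h := aux_psd_amgm hn _ (hB.mul_mul_conjTranspose_same C)
  have h1 : (C * B * C.conjTranspose).det = A.det * B.det := by
    rw [hC]; simp only [Matrix.det_mul]; ring
  have h2 : (C * B * C.conjTranspose).trace = (A * B).trace := by
    rw [hC, Matrix.trace_mul_comm, Matrix.mul_assoc]
  rwa [h1, h2] at h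

theorem aux_eig {n : ℕ} (A : Matrix (Fin n) (Fin n) ℝ) (hA : A.IsHermitian) (lam Lam : ℝ)
    (h1 : matLE (lam • 1) A) (h2 : matLE A (Lam • 1)) (i : Fin n) :
    lam ≤ hA.eigenvalues i ∧ hA.eigenvalues i ≤ Lam := by
  have e := hA.eigenvalues_eq i
  set w := (hA.eigenvectorBasis i).ofLp with hw
  have hn : star w ⬝ᵥ w = 1 := by
    have := (hA.eigenvectorBasis).orthonormal.1 i
    have h3 : ‖hA.eigenvectorBasis i‖ ^ 2 = 1 := by rw [this]; norm_num
    rw [EuclideanSpace.real_norm_sq_eq] at h3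
    simp only [dotProduct, star_trivial]
    rw [← h3]
    exact Finset.sum_congr rfl fun j _ => by rw [sq]
  have a1 := h1.dotProduct_mulVec_nonneg w
  have a2 := h2.dotProduct_mulVec_nonneg w
  simp only [Matrix.sub_mulVec, Matrix.smul_mulVec, Matrix.one_mulVec, dotProduct_sub,
    dotProduct_smul, hn, smul_eq_mul, mul_one] at a1 a2
  simp only [RCLike.re_to_real] at e
  rw [e]
  constructor <;> linarith

theorem aux_prod {n : ℕ} (hn : 0 < n) (lam Lam : ℝ) (hlam : 0 < lam) (m : Fin n → ℝ)
    (h1 : ∀ i, lam ≤ m i) (h2 : ∀ i, m i ≤ Lam) :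
    ((∑ i, m i) / n) ^ n ≤ (Lam / lam) ^ (n - 1) * ∏ i, m i := by
  haveI : Nonempty (Fin n) := ⟨⟨0, hn⟩⟩
  obtain ⟨i0, hi0⟩ := Finite.exists_max m
  have hpos : ∀ i, 0 < m i := fun i => hlam.trans_le (h1 i)
  have hL : 0 < Lam := (hpos i0).trans_le (h2 i0)
  have hn' : (0 : ℝ) < n := by exact_mod_cast hn
  have hs : (∑ i, m i) / n ≤ m i0 := by
    rw [div_le_iff₀ hn']
    calc _ ≤ ∑ i : Fin n, m i0 := Finset.sum_le_sum fun i _ => hi0 i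
      _ = _ := by simp [mul_comm]
  have hs0 : 0 ≤ (∑ i, m i) / n := div_nonneg (Finset.sum_nonneg fun i _ => (hpos i).le) hn'.le
  have hp : lam ^ (n - 1) * m i0 ≤ ∏ i, m i := by
    rw [← Finset.prod_erase_mul _ _ (Finset.mem_univ i0)]
    gcongr
    · exact (hpos i0).le
    · have := Finset.prod_le_prod (s := Finset.univ.erase i0) (f := fun _ => lam) (g := m)
        (fun _ _ => hlam.le) (fun i _ => h1 i)
      simpa using this
  calc _ ≤ m i0 ^ n := by gcongr
    _ = m i0 ^ (n - 1) * m i0 := by rw [← pow_succ]; congr 1; omega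
    _ ≤ Lam ^ (n - 1) * m i0 := by
      have := (hpos i0).le
      gcongr
      exact h2 i0
    _ = (Lam / lam) ^ (n - 1) * (lam ^ (n - 1) * m i0) := by
      rw [div_pow]; field_simp
    _ ≤ _ := by gcongr

/-- The key Jacobian bound. -/
theorem aux_det_bound {n : ℕ} (hn : 0 < n) (lam Lam : ℝ) (hlam : 0 < lam)
    (A B : Matrix (Fin n) (Fin n) ℝ) (hA : A.IsSymm)
    (h1 : matLE (lam • 1) A) (h2 : matLE A (Lam • 1)) (hB : B.PosSemidef)
    (htr : (A * B).trace ≤ A.trace) : B.det ≤ (Lam / lam) ^ (n - 1) := by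
  have hH : A.IsHermitian := by
    rw [Matrix.IsHermitian, Matrix.conjTranspose_eq_transpose_of_trivial]; exact hA
  have he := aux_eig A hH lam Lam h1 h2
  have hpd : A.PosDef := hH.posDef_iff_eigenvalues_pos.mpr fun i => hlam.trans_le (he i).1
  have k1 := hH.det_eq_prod_eigenvalues
  have k2 := hH.trace_eq_sum_eigenvalues
  simp only [RCLike.ofReal_real_eq_id, id] at k1 k2
  have k3 := aux_det_mul hn A B hpd.posSemidef hB
  have k4 := aux_prod hn lam Lam hlam hH.eigenvalues (fun i => (he i).1) (fun i => (he i).2)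
  rw [← k1, ← k2] at k4
  have hn' : (0 : ℝ) < n := by exact_mod_cast hn
  have hd : 0 < A.det := hpd.det_pos
  have htr0 : 0 ≤ (A * B).trace := by
    by_contra hneg
    obtain ⟨C, hC⟩ : ∃ C : Matrix (Fin n) (Fin n) ℝ, A = C.conjTranspose * C := by
      open scoped MatrixOrder in
      exact CStarAlgebra.nonneg_iff_eq_star_mul_self.mp hpd.posSemidef.nonneg
    have := (hB.mul_mul_conjTranspose_same C).trace_nonneg
    rw [Matrix.trace_mul_comm, ← Matrix.mul_assoc, ← hC] at this
    exact hneg this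
  have k5 : ((A * B).trace / n) ^ n ≤ (A.trace / n) ^ n := by gcongr
  have : A.det * B.det ≤ A.det * (Lam / lam) ^ (n - 1) := by linarith
  exact le_of_mul_le_mul_left this hd

theorem aux_cube_volume {n : ℕ} (r : ℝ) (x : Euc n) :
    volume (cube r x) = ENNReal.ofReal r ^ n := by
  have h : cube r x = (@WithLp.ofLp 2 (Fin n → ℝ)) ⁻¹'
      (Set.pi Set.univ fun i => Set.Ioo (x i - r / 2) (x i + r / 2)) := by
    ext y
    simp only [cube, Set.mem_setOf_eq, Set.mem_preimage, Set.mem_pi, Set.mem_univ, true_imp_iff,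
      Set.mem_Ioo, abs_lt]
    refine forall_congr' fun i => ?_
    constructor <;> rintro ⟨h1, h2⟩ <;> constructor <;> linarith
  rw [h, (PiLp.volume_preserving_ofLp (Fin n)).measure_preimage
    (MeasurableSet.univ_pi fun i => measurableSet_Ioo).nullMeasurableSet, Real.volume_pi_Ioo]
  simp

theorem aux_cube_open {n : ℕ} (r : ℝ) (x : Euc n) : IsOpen (cube r x) := by
  have : cube r x = ⋂ i, {y : Euc n | |y i - x i| < r / 2} := by ext; simp [cube]
  rw [this]
  refine isOpen_iInter_of_finite fun i => ?_
  exact isOpen_lt (by fun_prop) continuous_const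

theorem aux_cube_norm {n : ℕ} (hn : 0 < n) (x c : Euc n)
    (h : x ∈ cube (1 / (4 * Real.sqrt n)) c) : ‖x - c‖ ≤ 1 / 8 := by
  have hn' : (0 : ℝ) < n := by exact_mod_cast hn
  have hs : Real.sqrt n ^ 2 = n := Real.sq_sqrt hn'.le
  have hs0 : 0 < Real.sqrt n := Real.sqrt_pos.mpr hn'
  refine le_of_sq_le_sq ?_ (by norm_num)
  rw [EuclideanSpace.real_norm_sq_eq]
  calc ∑ i, (x - c) i ^ 2 ≤ ∑ i : Fin n, (1 / (64 * n) : ℝ) := by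
        refine Finset.sum_le_sum fun i _ => ?_
        have := h i
        have h2 := sq_le_sq' (by linarith [abs_nonneg (x i - c i), (abs_nonneg (x i - c i)).trans_lt this]) this.le
        rw [sq_abs] at h2
        refine h2.trans (le_of_eq ?_)
        rw [← hs, div_div, div_pow]
        rw [hs]; rw [mul_pow, mul_pow, hs]; ring
    _ = _ := by simp; field_simp; norm_num

/-- gradient representation -/
def auxL (n : ℕ) : (Euc n →L[ℝ] ℝ) →L[ℝ] Euc n :=
  ∑ i, (ContinuousLinearMap.apply ℝ ℝ (EuclideanSpace.single i (1 : ℝ) : Euc n)).smulRight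
    (EuclideanSpace.single i (1 : ℝ) : Euc n)

theorem auxL_apply {n : ℕ} (l : Euc n →L[ℝ] ℝ) (j : Fin n) :
    auxL n l j = l (EuclideanSpace.single j 1) := by
  simp [auxL, ContinuousLinearMap.sum_apply, Finset.sum_apply, Pi.single_apply]

theorem auxL_eq {n : ℕ} (l : Euc n →L[ℝ] ℝ) (p : Euc n) (h : ∀ w, l w = ⟪p, w⟫_ℝ) :
    auxL n l = p := by
  ext j
  rw [auxL_apply, h]
  simp [EuclideanSpace.inner_single_right]

theorem aux_second {g g' : ℝ → ℝ} {c : ℝ} (h1 : ∀ᶠ t in nhds 0, HasDerivAt g (g' t) t)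
    (h2 : HasDerivAt g' c 0) (hm : IsLocalMin g 0) : 0 ≤ c := by
  by_contra hc
  push Not at hc
  have e1 : deriv g =ᶠ[nhds 0] g' := h1.mono fun t ht => ht.deriv
  have d0 : deriv g 0 = 0 := hm.deriv_eq_zero
  have d2 : deriv (deriv g) 0 = c := by rw [e1.deriv_eq, h2.deriv]
  have hM := isLocalMax_of_deriv_deriv_neg (by rw [d2]; exact hc) d0 h1.self_of_nhds.continuousAt
  have hconst : g =ᶠ[nhds 0] fun _ => g 0 := by
    filter_upwards [hm, hM] with t a b using le_antisymm b a
  have : deriv g =ᶠ[nhds 0] deriv (fun _ => g 0) := hconst.deriv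
  have h3 : deriv (deriv g) 0 = 0 := by
    rw [this.deriv_eq]; simp
  linarith

theorem aux_line_min {n : ℕ} {Ω : Set (Euc n)} (hΩ : IsOpen Ω) {v : Euc n → ℝ} {K : ℝ} {x p : Euc n}
    (hx : x ∈ Ω) (hp : ∀ y ∈ Ω, v y ≥ v x + ⟪p, y - x⟫_ℝ - K / 2 * ‖y - x‖ ^ 2) (u : Euc n) :
    IsLocalMin (fun t : ℝ => v (x + t • u) - t * ⟪p, u⟫_ℝ + K / 2 * t ^ 2 * ‖u‖ ^ 2) 0 := by
  have hc : ContinuousAt (fun t : ℝ => x + t • u) 0 := by fun_prop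
  have hev : ∀ᶠ t : ℝ in nhds 0, x + t • u ∈ Ω :=
    hc.eventually_mem (by simpa using hΩ.mem_nhds hx)
  filter_upwards [hev] with t ht
  have := hp _ ht
  simp only [add_sub_cancel_left, inner_smul_right, norm_smul, mul_pow, Real.norm_eq_abs,
    sq_abs] at this
  simp
  nlinarith

section
variable {n : ℕ} {Ω : Set (Euc n)} {v : Euc n → ℝ} {v' : Euc n → (Euc n →L[ℝ] ℝ)}
  {v'' : Euc n → (Euc n →L[ℝ] Euc n →L[ℝ] ℝ)}

theorem aux_line_ev (hΩ : IsOpen Ω) (hv' : ∀ x ∈ Ω, HasFDerivAt v (v' x) x) {K : ℝ} {x p : Euc n}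
    (hx : x ∈ Ω) (u : Euc n) :
    ∀ᶠ t : ℝ in nhds 0, HasDerivAt
      (fun t : ℝ => v (x + t • u) - t * ⟪p, u⟫_ℝ + K / 2 * t ^ 2 * ‖u‖ ^ 2)
      (v' (x + t • u) u - ⟪p, u⟫_ℝ + K * t * ‖u‖ ^ 2) t := by
  have hc : ContinuousAt (fun t : ℝ => x + t • u) 0 := by fun_prop
  have hev : ∀ᶠ t : ℝ in nhds 0, x + t • u ∈ Ω :=
    hc.eventually_mem (by simpa using hΩ.mem_nhds hx)
  filter_upwards [hev] with t ht
  have a1 : HasDerivAt (fun t : ℝ => x + t • u) u t := by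
    simpa using ((hasDerivAt_id t).smul_const u).const_add x
  have a2 := (hv' _ ht).comp_hasDerivAt t a1
  have a3 : HasDerivAt (fun t : ℝ => t * ⟪p, u⟫_ℝ) (⟪p, u⟫_ℝ) t := by
    simpa using (hasDerivAt_id t).mul_const (⟪p, u⟫_ℝ)
  have a4 : HasDerivAt (fun t : ℝ => K / 2 * t ^ 2 * ‖u‖ ^ 2) (K * t * ‖u‖ ^ 2) t := by
    have := (((hasDerivAt_id t).pow 2).const_mul (K / 2)).mul_const (‖u‖ ^ 2)
    refine this.congr_deriv ?_
    simp only [id, Nat.cast_ofNat, Nat.add_one_sub_one, pow_one, mul_one]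
    ring
  exact (a2.sub a3).add a4

theorem aux_grad (hΩ : IsOpen Ω) (hv' : ∀ x ∈ Ω, HasFDerivAt v (v' x) x) {K : ℝ} {x p : Euc n}
    (hx : x ∈ Ω) (hp : ∀ y ∈ Ω, v y ≥ v x + ⟪p, y - x⟫_ℝ - K / 2 * ‖y - x‖ ^ 2) (u : Euc n) :
    v' x u = ⟪p, u⟫_ℝ := by
  have h := (aux_line_min hΩ hx hp u).hasDerivAt_eq_zero
    (aux_line_ev (p := p) hΩ hv' hx u).self_of_nhds
  simp at h
  linarith

theorem aux_hess (hΩ : IsOpen Ω) (hv' : ∀ x ∈ Ω, HasFDerivAt v (v' x) x)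
    (hv'' : ∀ x ∈ Ω, HasFDerivAt v' (v'' x) x) {K : ℝ} {x p : Euc n}
    (hx : x ∈ Ω) (hp : ∀ y ∈ Ω, v y ≥ v x + ⟪p, y - x⟫_ℝ - K / 2 * ‖y - x‖ ^ 2) (u : Euc n) :
    0 ≤ v'' x u u + K * ‖u‖ ^ 2 := by
  refine aux_second (aux_line_ev (p := p) (K := K) hΩ hv' hx u) ?_ (aux_line_min hΩ hx hp u)
  have a1 : HasDerivAt (fun t : ℝ => x + t • u) u 0 := by
    simpa using ((hasDerivAt_id (0 : ℝ)).smul_const u).const_add x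
  have hx' : HasFDerivAt v' (v'' x) (x + (0 : ℝ) • u) := by simpa using hv'' x hx
  have a2 := hx'.comp_hasDerivAt 0 a1
  have a3 : HasDerivAt (fun t : ℝ => v' (x + t • u) u) (v'' x u u) 0 := by
    simpa using a2.clm_apply (hasDerivAt_const 0 u)
  have a4 : HasDerivAt (fun t : ℝ => K * t * ‖u‖ ^ 2) (K * ‖u‖ ^ 2) 0 := by
    simpa using ((hasDerivAt_id (0 : ℝ)).const_mul K).mul_const (‖u‖ ^ 2)
  exact (a3.sub_const _).add a4

theorem aux_meas (hΩ : IsOpen Ω) (hv' : ∀ x ∈ Ω, HasFDerivAt v (v' x) x)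
    (hv'' : ∀ x ∈ Ω, HasFDerivAt v' (v'' x) x) (K : ℝ) : MeasurableSet (Gm K v Ω) := by
  have hcv : ContinuousOn v Ω := fun x hx => (hv' x hx).continuousAt.continuousWithinAt
  have hcv' : ContinuousOn v' Ω := fun x hx => (hv'' x hx).continuousAt.continuousWithinAt
  have heq : Gm K v Ω = Ω ∩ ⋂ y ∈ Ω, {x | x ∈ Ω → v x + v' x (y - x) - K / 2 * ‖y - x‖ ^ 2 ≤ v y} := by
    ext x
    simp only [Gm, Set.mem_setOf_eq, Set.mem_inter_iff, Set.mem_iInter]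
    constructor
    · rintro ⟨hx, p, hp⟩
      refine ⟨hx, fun y hy _ => ?_⟩
      rw [aux_grad hΩ hv' hx hp]
      exact hp y hy
    · rintro ⟨hx, h⟩
      refine ⟨hx, auxL n (v' x), fun y hy => ?_⟩
      have := h y hy hx
      have e : ⟪auxL n (v' x), y - x⟫_ℝ = v' x (y - x) := by
        obtain ⟨q, hq⟩ : ∃ q : Euc n, ∀ w, v' x w = ⟪q, w⟫_ℝ :=
          ⟨(InnerProductSpace.toDual ℝ (Euc n)).symm (v' x), fun w => by simp⟩
        rw [auxL_eq _ q hq, hq]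
      rw [e]; exact this
  have hcl : IsClosed ((Subtype.val : Ω → Euc n) ⁻¹' (Gm K v Ω)) := by
    have : (Subtype.val : Ω → Euc n) ⁻¹' (Gm K v Ω) = ⋂ y ∈ Ω, {x : Ω | v x + v' x (y - x) - K / 2 * ‖y - x‖ ^ 2 ≤ v y} := by
      rw [heq]
      ext x
      simp [x.2]
    rw [this]
    refine isClosed_biInter fun y _ => isClosed_le ?_ continuous_const
    have c1 : Continuous fun x : Ω => v x := continuousOn_iff_continuous_restrict.mp hcv
    have c2 : Continuous fun x : Ω => v' x := continuousOn_iff_continuous_restrict.mp hcv'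
    have c3 : Continuous fun x : Ω => v' x (y - x) := c2.clm_apply (by fun_prop)
    exact (c1.add c3).sub (by fun_prop)
  have hm := hcl.measurableSet
  have := (MeasurableEmbedding.subtype_coe hΩ.measurableSet).measurableSet_image.mpr hm
  rw [Subtype.image_preimage_coe] at this
  rwa [Set.inter_eq_right.mpr (fun x hx => hx.1)] at this

theorem aux_jac (hn : 0 < n) {lam Lam : ℝ} (hlam : 0 < lam) (hΩ : IsOpen Ω)
    {a : Euc n → Matrix (Fin n) (Fin n) ℝ}
    (ha : ∀ x ∈ Ω, (a x).IsSymm ∧ matLE (lam • 1) (a x) ∧ matLE (a x) (Lam • 1))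
    (hv' : ∀ x ∈ Ω, HasFDerivAt v (v' x) x)
    (hv'' : ∀ x ∈ Ω, HasFDerivAt v' (v'' x) x)
    (hsuper : ∀ x ∈ Ω, (a x * hessOfSecond v'' x).trace ≤ 0)
    {x : Euc n} (hx : x ∈ Gm 32 v Ω) :
    |(ContinuousLinearMap.id ℝ (Euc n) + (1 / 32 : ℝ) • (auxL n).comp (v'' x)).det| ≤
      (Lam / lam) ^ (n - 1) := by
  obtain ⟨hxΩ, p, hp⟩ := hx
  have hsym : ∀ u w, v'' x u w = v'' x w u := fun u w =>
    second_derivative_symmetric_of_eventually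
      ((hΩ.eventually_mem hxΩ).mono fun y hy => hv' y hy) (hv'' x hxΩ) u w
  set H := hessOfSecond v'' x with hH
  set B : Matrix (Fin n) (Fin n) ℝ := 1 + (1 / 32 : ℝ) • H with hB
  have hHs : H.transpose = H := by
    ext i j; simp [hH, hessOfSecond, hsym (EuclideanSpace.single i 1)]
  have hdet : (ContinuousLinearMap.id ℝ (Euc n) + (1 / 32 : ℝ) • (auxL n).comp (v'' x)).det =
      B.det := by
    rw [ContinuousLinearMap.det, ← LinearMap.det_toMatrix (EuclideanSpace.basisFun (Fin n) ℝ).toBasis,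
      ← Matrix.det_transpose B]
    congr 1
    ext i j
    simp [LinearMap.toMatrix_apply, auxL_apply, hB, hH, hessOfSecond, Matrix.one_apply,
      Pi.single_apply, eq_comm]
  have hquad : ∀ w : Fin n → ℝ, w ⬝ᵥ (H.mulVec w) = v'' x (WithLp.toLp 2 w) (WithLp.toLp 2 w) := by
    intro w
    have hw : (WithLp.toLp 2 w : Euc n) = ∑ i, w i • EuclideanSpace.single i (1 : ℝ) := by
      ext j; simp [Finset.sum_apply, Pi.single_apply]
    rw [hw]
    simp [dotProduct, Matrix.mulVec, hH, hessOfSecond, Finset.mul_sum, map_sum,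
      ContinuousLinearMap.sum_apply]
    rw [Finset.sum_comm]
    refine Finset.sum_congr rfl fun i _ => Finset.sum_congr rfl fun j _ => ?_
    rw [hsym]; ring
  have hBp : B.PosSemidef := by
    refine .of_dotProduct_mulVec_nonneg ?_ fun w => ?_
    · rw [Matrix.IsHermitian, Matrix.conjTranspose_eq_transpose_of_trivial, hB,
        Matrix.transpose_add, Matrix.transpose_smul, hHs, Matrix.transpose_one]
    · have h1 := aux_hess hΩ hv' hv'' hxΩ hp (WithLp.toLp 2 w)
      rw [← hquad, EuclideanSpace.real_norm_sq_eq] at h1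
      have h2 : w ⬝ᵥ w = ∑ i, w i ^ 2 := by simp [dotProduct, sq]
      simp only [star_trivial, hB, Matrix.add_mulVec, Matrix.one_mulVec, Matrix.smul_mulVec,
        dotProduct_add, dotProduct_smul, smul_eq_mul, h2]
      simp only at h1
      linarith
  obtain ⟨s1, s2, s3⟩ := ha x hxΩ
  have htr : (a x * B).trace ≤ (a x).trace := by
    rw [hB, Matrix.mul_add, Matrix.mul_one, Matrix.trace_add, Matrix.mul_smul, Matrix.trace_smul,
      smul_eq_mul]
    linarith [hsuper x hxΩ]
  rw [hdet, abs_of_nonneg hBp.det_nonneg]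
  exact aux_det_bound hn lam Lam hlam _ _ s1 s2 s3 hBp htr

/-- comparison inequality -/
theorem aux_compare {x x0 p e : Euc n} {k : ℝ} (hk : 31.5 ≤ k) (h0 : ‖x0‖ ≤ 1 / 8)
    (he : ‖e‖ ≤ 1 / 8) (hx : 1 / 2 ≤ ‖x‖) (vx vx0 : ℝ)
    (hv : vx ≥ vx0 + ⟪p, x - x0⟫_ℝ - (32 - k) / 2 * ‖x - x0‖ ^ 2) (z : Euc n)
    (hz : z = (1 / 32 : ℝ) • (p + (32 - k) • x0) + e) :
    vx0 + 16 * ‖x0 - z‖ ^ 2 < vx + 16 * ‖x - z‖ ^ 2 := by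
  have i1 : ‖x - x0‖ ^ 2 = ‖x‖ ^ 2 - 2 * ⟪x, x0⟫_ℝ + ‖x0‖ ^ 2 := norm_sub_sq_real x x0
  have i2 : ‖x0 - z‖ ^ 2 = ‖x0‖ ^ 2 - 2 * ⟪x0, z⟫_ℝ + ‖z‖ ^ 2 := norm_sub_sq_real x0 z
  have i3 : ‖x - z‖ ^ 2 = ‖x‖ ^ 2 - 2 * ⟪x, z⟫_ℝ + ‖z‖ ^ 2 := norm_sub_sq_real x z
  have i4 : ⟪x, z⟫_ℝ = 1 / 32 * (⟪x, p⟫_ℝ + (32 - k) * ⟪x, x0⟫_ℝ) + ⟪x, e⟫_ℝ := by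
    rw [hz, inner_add_right, inner_smul_right, inner_add_right, inner_smul_right]
  have i5 : ⟪x0, z⟫_ℝ = 1 / 32 * (⟪x0, p⟫_ℝ + (32 - k) * ‖x0‖ ^ 2) + ⟪x0, e⟫_ℝ := by
    rw [hz, inner_add_right, inner_smul_right, inner_add_right, inner_smul_right,
      real_inner_self_eq_norm_sq]
  have i6 : ⟪p, x - x0⟫_ℝ = ⟪x, p⟫_ℝ - ⟪x0, p⟫_ℝ := by
    rw [inner_sub_right, real_inner_comm, real_inner_comm x0]
  have i7 : ⟪x, e⟫_ℝ ≤ ‖x‖ * (1 / 8) :=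
    (real_inner_le_norm x e).trans (by gcongr)
  have i8 : -(‖x0‖ * (1 / 8)) ≤ ⟪x0, e⟫_ℝ := by
    have := abs_real_inner_le_norm x0 e
    have h2 : ‖x0‖ * ‖e‖ ≤ ‖x0‖ * (1 / 8) := by gcongr
    linarith [(abs_le.mp this).1]
  have i9 : 0 < (‖x‖ + ‖x0‖) * (k / 2 * (‖x‖ - ‖x0‖) - 4) := by
    apply mul_pos
    · linarith [norm_nonneg x0]
    · nlinarith [norm_nonneg x0]
  rw [i2, i3, i4, i5]
  rw [i6, i1] at hv
  nlinarith

theorem aux_touch (hn : 2 ≤ n) (hΩ : IsOpen Ω) (hQ : closure (cube 2 0) ⊆ Ω)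
    (hv' : ∀ x ∈ Ω, HasFDerivAt v (v' x) x) {x0 p : Euc n}
    (h0 : x0 ∈ cube (1 / (4 * Real.sqrt n)) 0)
    (hp : ∀ x ∈ Ω, v x ≥ v x0 + ⟪p, x - x0⟫_ℝ - (1 / n : ℝ) / 2 * ‖x - x0‖ ^ 2) {z : Euc n}
    (hz : z ∈ cube (1 / (4 * Real.sqrt n)) ((1 / 32 : ℝ) • (p + (1 / n : ℝ) • x0))) :
    ∃ x ∈ Gm 32 v Ω ∩ cube 1 0, x + (1 / 32 : ℝ) • auxL n (v' x) = z := by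
  have hn0 : 0 < n := by omega
  have hcoord : ∀ (x : Euc n) i, |x i| ≤ ‖x‖ := fun x i => by
    simpa using PiLp.norm_apply_le x i
  have hball : closedBall (0 : Euc n) (1 / 2) ⊆ Ω := by
    intro x hx
    refine hQ (subset_closure fun i => ?_)
    have := hcoord x i
    simp at hx ⊢
    linarith
  have hx0n : ‖x0‖ ≤ 1 / 8 := by simpa using aux_cube_norm hn0 x0 0 h0
  have hen := aux_cube_norm hn0 z _ hz
  set k : ℝ := 32 - 1 / n with hk
  have hk' : (1 / n : ℝ) = 32 - k := by rw [hk]; ring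
  have hk1 : 31.5 ≤ k := by
    have : (1 / n : ℝ) ≤ 1 / 2 := by
      apply one_div_le_one_div_of_le (by norm_num); exact_mod_cast hn
    linarith
  have hcmp : ∀ x ∈ Ω, 1 / 2 ≤ ‖x‖ → v x0 + 16 * ‖x0 - z‖ ^ 2 < v x + 16 * ‖x - z‖ ^ 2 := by
    intro x hx hxn
    refine aux_compare hk1 hx0n hen hxn _ _ (by rw [← hk']; exact hp x hx) z ?_
    rw [hk']; abel
  have hcont : ContinuousOn (fun x => v x + 16 * ‖x - z‖ ^ 2) (closedBall (0 : Euc n) (1 / 2)) := by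
    have hcv : ContinuousOn v (closedBall (0 : Euc n) (1 / 2)) := fun x hx =>
      (hv' x (hball hx)).continuousAt.continuousWithinAt
    fun_prop
  have hx0b : x0 ∈ closedBall (0 : Euc n) (1 / 2) := by simp; linarith
  obtain ⟨x1, hx1, hmin⟩ := (isCompact_closedBall (0 : Euc n) (1 / 2)).exists_isMinOn ⟨x0, hx0b⟩ hcont
  have hx1Ω := hball hx1
  have hm0 : v x1 + 16 * ‖x1 - z‖ ^ 2 ≤ v x0 + 16 * ‖x0 - z‖ ^ 2 := hmin hx0b
  have hx1n : ‖x1‖ < 1 / 2 := by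
    by_contra hcon
    push Not at hcon
    linarith [hcmp x1 hx1Ω hcon]
  have hmin' : ∀ x ∈ Ω, v x1 + 16 * ‖x1 - z‖ ^ 2 ≤ v x + 16 * ‖x - z‖ ^ 2 := by
    intro x hx
    by_cases hxn : 1 / 2 ≤ ‖x‖
    · linarith [hcmp x hx hxn]
    · push Not at hxn
      exact hmin (show x ∈ closedBall (0 : Euc n) (1 / 2) by simpa using hxn.le)
  have hpar : ∀ x ∈ Ω, v x ≥ v x1 + ⟪(32 : ℝ) • (z - x1), x - x1⟫_ℝ - 32 / 2 * ‖x - x1‖ ^ 2 := by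
    intro x hx
    have h1 := hmin' x hx
    have h2 : ‖x - z‖ ^ 2 = ‖x - x1‖ ^ 2 - 2 * ⟪z - x1, x - x1⟫_ℝ + ‖x1 - z‖ ^ 2 := by
      have : x - z = (x - x1) - (z - x1) := by abel
      rw [this, norm_sub_sq_real, real_inner_comm, norm_sub_rev z x1]
    rw [inner_smul_left]
    simp only [RCLike.conj_to_real]
    linarith
  refine ⟨x1, ⟨⟨hx1Ω, _, hpar⟩, fun i => ?_⟩, ?_⟩
  · have := hcoord x1 i
    simp
    linarith
  · rw [auxL_eq _ _ (aux_grad hΩ hv' hx1Ω hpar), smul_smul]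
    norm_num
end

/-- measure estimate for strong supersolutions of aⁱʲ v_ij ≤ 0,
with explicit σ₁ = 1 − (λ/Λ)^{n−1}(1/(4√n))^n. -/
theorem stmt_5 (n : ℕ) (hn : 2 ≤ n) (lam Lam : ℝ) (hlam : 0 < lam) (hLam : lam ≤ Lam)
    (Ω : Set (Euc n)) (hΩ : IsOpen Ω) (hQ : closure (cube 2 0) ⊆ Ω)
    (a : Euc n → Matrix (Fin n) (Fin n) ℝ)
    (ha : ∀ x ∈ Ω, (a x).IsSymm ∧ matLE (lam • 1) (a x) ∧ matLE (a x) (Lam • 1))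
    (v : Euc n → ℝ) (v' : Euc n → (Euc n →L[ℝ] ℝ)) (v'' : Euc n → (Euc n →L[ℝ] Euc n →L[ℝ] ℝ))
    (hv' : ∀ x ∈ Ω, HasFDerivAt v (v' x) x)
    (hv'' : ∀ x ∈ Ω, HasFDerivAt v' (v'' x) x)
    (hsuper : ∀ x ∈ Ω, (a x * hessOfSecond v'' x).trace ≤ 0)
    (hne : (Gm (1 / n) v Ω ∩ cube (1 / (4 * Real.sqrt n)) 0).Nonempty) :
    ENNReal.ofReal (1 - (1 - (lam / Lam) ^ (n - 1) * (1 / (4 * Real.sqrt n)) ^ n)) *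
        volume (cube (1 : ℝ) (0 : Euc n)) ≤
      volume (Gm 32 v Ω ∩ cube 1 0) := by
  obtain ⟨x0, ⟨hx0Ω, p, hp⟩, hx0⟩ := hne
  have hn0 : 0 < n := by omega
  set r : ℝ := 1 / (4 * Real.sqrt n) with hr
  have hr0 : 0 ≤ r := by positivity
  have hL : 0 < Lam := hlam.trans_le hLam
  set T := Gm 32 v Ω ∩ cube 1 0 with hT
  have hTm : MeasurableSet T := (aux_meas hΩ hv' hv'' 32).inter (aux_cube_open _ _).measurableSet
  set Φ : Euc n → Euc n := fun x => x + (1 / 32 : ℝ) • auxL n (v' x) with hΦ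
  set Φ' : Euc n → (Euc n →L[ℝ] Euc n) := fun x =>
    ContinuousLinearMap.id ℝ (Euc n) + (1 / 32 : ℝ) • (auxL n).comp (v'' x) with hΦ'
  have hd : ∀ x ∈ T, HasFDerivWithinAt Φ (Φ' x) T x := fun x hx =>
    ((hasFDerivAt_id x).add (((auxL n).hasFDerivAt.comp x (hv'' x hx.1.1)).const_smul
      (1 / 32 : ℝ))).hasFDerivWithinAt
  have hsub : cube r ((1 / 32 : ℝ) • (p + (1 / n : ℝ) • x0)) ⊆ Φ '' T := fun z hz =>
    aux_touch hn hΩ hQ hv' hx0 hp hz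
  have hmain : ENNReal.ofReal r ^ n ≤ ENNReal.ofReal ((Lam / lam) ^ (n - 1)) * volume T := by
    calc ENNReal.ofReal r ^ n = volume (cube r ((1 / 32 : ℝ) • (p + (1 / n : ℝ) • x0))) :=
          (aux_cube_volume _ _).symm
      _ ≤ volume (Φ '' T) := measure_mono hsub
      _ ≤ ∫⁻ x in T, ENNReal.ofReal |(Φ' x).det| :=
          addHaar_image_le_lintegral_abs_det_fderiv volume hTm hd
      _ ≤ ∫⁻ x in T, ENNReal.ofReal ((Lam / lam) ^ (n - 1)) :=
          setLIntegral_mono' hTm fun x hx =>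
            ENNReal.ofReal_le_ofReal (aux_jac hn0 hlam hΩ ha hv' hv'' hsuper hx.1)
      _ = _ := by simp
  rw [aux_cube_volume, ENNReal.ofReal_one, one_pow, mul_one, sub_sub_cancel,
    ENNReal.ofReal_mul (by positivity), ENNReal.ofReal_pow hr0]
  calc ENNReal.ofReal ((lam / Lam) ^ (n - 1)) * ENNReal.ofReal r ^ n
      ≤ ENNReal.ofReal ((lam / Lam) ^ (n - 1)) *
        (ENNReal.ofReal ((Lam / lam) ^ (n - 1)) * volume T) := by gcongr
    _ = volume T := by
      rw [← mul_assoc, ← ENNReal.ofReal_mul (by positivity), ← mul_pow]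
      have : lam / Lam * (Lam / lam) = 1 := by field_simp
      rw [this]; simp
end
end

section
/- Let n ≥ 2 be an integer and 0 < λ ≤ Λ real constants, and set M₁ := 8·(36n)^{max{1, (n−1)Λ/λ − 1}}. Let Ω ⊆ ℝⁿ be an open set containing the closed ball of radius 2√n centered at 0, and let v : Ω → ℝ be a continuous viscosity supersolution of M⁻_{λ,Λ}(D²v) ≤ 0 in Ω. Suppose L : ℝⁿ → ℝ is an affine function and x* ∈ Q₃ are such that v(x) ≥ L(x) − (1/(16n))|x−x*|² for all x ∈ Ω, with equality at x = x*. Then inf over the closure of Q_{1/(12√n)} of (v − L + 1) is at most M₁. -/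
open MeasureTheory Metric
open scoped InnerProductSpace ENNReal

noncomputable section

lemma aux_hasFDeriv {n : ℕ} (c s e b : ℝ) (p x : Euc n) (hx : x ≠ 0) :
    HasFDerivAt (fun y : Euc n => c * (‖y‖ ^ 2) ^ s + e * ‖y‖ ^ 2 + ⟪p, y⟫_ℝ + b)
      ((2 * (c * s * (‖x‖ ^ 2) ^ (s - 1) + e)) • innerSL ℝ x + innerSL ℝ p) x := by
  have h1 : HasFDerivAt (fun y : Euc n => ‖y‖ ^ 2) (2 • innerSL ℝ x) x :=
    (hasStrictFDerivAt_norm_sq x).hasFDerivAt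
  have hne : ‖x‖ ^ 2 ≠ 0 := by simpa using hx
  have h2 := h1.rpow_const (p := s) (Or.inl hne)
  have h3 : HasFDerivAt (fun y : Euc n => ⟪p, y⟫_ℝ) (innerSL ℝ p) x := (innerSL ℝ p).hasFDerivAt
  have h4 := (((h2.const_mul c).add (h1.const_mul e)).add h3).add_const b
  refine h4.congr_fderiv ?_
  ext y
  simp
  ring

lemma aux_hess_s7 {n : ℕ} (c s e b : ℝ) (p x : Euc n) (hx : x ≠ 0) :
    hessianMatrix (fun y : Euc n => c * (‖y‖ ^ 2) ^ s + e * ‖y‖ ^ 2 + ⟪p, y⟫_ℝ + b) x =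
      (4 * c * s * (s - 1) * (‖x‖ ^ 2) ^ (s - 2)) • Matrix.vecMulVec (x : Fin n → ℝ) x
        + (2 * (c * s * (‖x‖ ^ 2) ^ (s - 1) + e)) • (1 : Matrix (Fin n) (Fin n) ℝ) := by
  have h1 : HasFDerivAt (fun y : Euc n => ‖y‖ ^ 2) (2 • innerSL ℝ x) x :=
    (hasStrictFDerivAt_norm_sq x).hasFDerivAt
  have hne : ‖x‖ ^ 2 ≠ 0 := by simpa using hx
  have h2 := h1.rpow_const (p := s - 1) (Or.inl hne)
  have h3 := ((h2.const_mul (c * s)).add_const e).const_mul 2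
  have h4 : HasFDerivAt (fun y : Euc n => innerSL ℝ y) (innerSL ℝ : Euc n →L[ℝ] Euc n →L[ℝ] ℝ) x :=
    (innerSL ℝ : Euc n →L[ℝ] Euc n →L[ℝ] ℝ).hasFDerivAt
  have h5 := (h3.smul h4).add_const (innerSL ℝ p)
  have hev : fderiv ℝ (fun y : Euc n => c * (‖y‖ ^ 2) ^ s + e * ‖y‖ ^ 2 + ⟪p, y⟫_ℝ + b) =ᶠ[nhds x]
      fun y => (2 * (c * s * (‖y‖ ^ 2) ^ (s - 1) + e)) • innerSL ℝ y + innerSL ℝ p := by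
    filter_upwards [isOpen_ne.mem_nhds hx] with y hy
    exact (aux_hasFDeriv c s e b p y hy).fderiv
  have h6 := (h5.congr_of_eventuallyEq hev).fderiv
  ext i j
  simp only [hessianMatrix, Matrix.of_apply, iteratedFDeriv_two_apply]
  rw [h6]
  have e2 : s - 1 - 1 = s - 2 := by ring
  have hs : (innerSL ℝ (EuclideanSpace.single i 1 : Euc n)) (EuclideanSpace.single j 1)
      = if i = j then 1 else 0 := by
    rw [innerSL_apply_apply, EuclideanSpace.inner_single_left]
    simp [Pi.single_apply]
  simp [Matrix.vecMulVec, e2, Matrix.one_apply, hs, PiLp.inner_apply]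
  split_ifs <;> ring

open scoped MatrixOrder ComplexOrder in
lemma aux_psd {n : ℕ} (B : Matrix (Fin n) (Fin n) ℝ) (hB : B.PosSemidef) (x : Fin n → ℝ) :
    x ⬝ᵥ (B.mulVec x) ≤ (x ⬝ᵥ x) * B.trace := by
  obtain ⟨C, rfl⟩ := (CStarAlgebra.nonneg_iff_eq_star_mul_self (a := B)).1 hB.nonneg
  have hE : star C * C = C.transpose * C := rfl
  rw [hE, ← Matrix.mulVec_mulVec, Matrix.dotProduct_mulVec, Matrix.vecMul_transpose]
  have hT : (C.transpose * C).trace = ∑ i, ∑ j, C i j ^ 2 := by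
    rw [Matrix.trace_mul_comm]
    simp [Matrix.trace, Matrix.mul_apply, sq]
  rw [hT]
  simp only [dotProduct, Matrix.mulVec, ← sq]
  rw [Finset.mul_sum]
  refine Finset.sum_le_sum fun i _ => ?_
  rw [mul_comm]
  exact Finset.sum_mul_sq_le_sq_mul_sq _ _ _

lemma aux_trace {n : ℕ} (A : Matrix (Fin n) (Fin n) ℝ) (x : Fin n → ℝ) (m k : ℝ) :
    (A * (m • Matrix.vecMulVec x x + k • (1 : Matrix (Fin n) (Fin n) ℝ))).trace
      = m * (x ⬝ᵥ (A.mulVec x)) + k * A.trace := by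
  rw [Matrix.mul_add, Matrix.trace_add, Matrix.mul_smul, Matrix.mul_smul, Matrix.trace_smul,
    Matrix.trace_smul, Matrix.mul_one, Matrix.mul_vecMulVec, Matrix.trace_vecMulVec, dotProduct_comm]
  simp

lemma aux_pucci {n : ℕ} (lam Lam : ℝ) (hlam : 0 < lam) (hLam : lam ≤ Lam) (hn : 2 ≤ n)
    (c β e b : ℝ) (hc : 0 < c) (hβ : 0 < β) (he : 0 < e)
    (hb : (n - 1) * Lam ≤ (2 * β + 1) * lam) (p x : Euc n) (hx : x ≠ 0) :
    0 < pucciInf lam Lam (hessianMatrix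
      (fun y : Euc n => c * (‖y‖ ^ 2) ^ (-β) + e * ‖y‖ ^ 2 + ⟪p, y⟫_ℝ + b) x) := by
  rw [aux_hess_s7 _ _ _ _ _ _ hx]
  have hn0 : (0:ℝ) < n := by positivity
  refine lt_of_lt_of_le (show 0 < 2 * e * (n * lam) by positivity) ?_
  unfold pucciInf
  apply le_csInf
  · refine ⟨_, lam • 1, ?_, ?_, ?_, rfl⟩
    · simp [Matrix.IsSymm]
    · simp [matLE, Matrix.PosSemidef.zero]
    · unfold matLE
      rw [← sub_smul]
      exact Matrix.PosSemidef.one.smul (by linarith)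
  · rintro _ ⟨A, -, h1, h2, rfl⟩
    rw [aux_trace]
    have hxx : (x : Fin n → ℝ) ⬝ᵥ x = ‖x‖ ^ 2 := by
      rw [EuclideanSpace.real_norm_sq_eq]; simp [dotProduct, sq]
    have q1 := h1.dotProduct_mulVec_nonneg x
    have q2 := aux_psd _ h2 x
    have q3 := h1.trace_nonneg
    simp only [Matrix.sub_mulVec, dotProduct_sub, Matrix.smul_mulVec, Matrix.one_mulVec, dotProduct_smul, star_trivial, hxx, Matrix.trace_sub, Matrix.trace_smul, Matrix.trace_one, Fintype.card_fin, smul_eq_mul] at q1 q2 q3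
    have ht : 0 < ‖x‖ ^ 2 := by positivity
    set t := ‖x‖ ^ 2
    set Q := (x : Fin n → ℝ) ⬝ᵥ A.mulVec x
    have ex : t ^ (-β - 1) = t * t ^ (-β - 2) := by
      rw [show -β - 1 = 1 + (-β - 2) by ring, Real.rpow_add ht, Real.rpow_one]
    rw [ex]
    have hD : 0 < 2 * c * β * t ^ (-β - 2) := by positivity
    set T := t ^ (-β - 2)
    have key : 0 ≤ (2 * β + 2) * Q - t * A.trace := by nlinarith
    nlinarith [mul_nonneg hD.le key]

theorem stmt_7 (n : ℕ) (hn : 2 ≤ n) (lam Lam : ℝ) (hlam : 0 < lam) (hLam : lam ≤ Lam)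
    (Ω : Set (Euc n)) (hΩ : IsOpen Ω) (hB : closedBall 0 (2 * Real.sqrt n) ⊆ Ω)
    (v : Euc n → ℝ) (hv : ContinuousOn v Ω) (hsuper : ViscSupersol lam Lam Ω v)
    (L : Euc n → ℝ) (hL : ∃ p : Euc n, ∃ b : ℝ, ∀ x, L x = ⟪p, x⟫_ℝ + b)
    (xs : Euc n) (hxs : xs ∈ cube 3 0)
    (htouch : ∀ x ∈ Ω, v x ≥ L x - 1 / (16 * n) * ‖x - xs‖ ^ 2)
    (heq : v xs = L xs) :
    sInf ((fun x => v x - L x + 1) '' closure (cube (1 / (12 * Real.sqrt n)) 0)) ≤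
      8 * (36 * (n : ℝ)) ^ (max (1 : ℝ) (((n : ℝ) - 1) * Lam / lam - 1)) := by
  obtain ⟨p, b, hL⟩ := hL
  have hn2 : (2:ℝ) ≤ n := by exact_mod_cast hn
  have hn0 : (0:ℝ) < n := by linarith
  set α := max (1 : ℝ) (((n : ℝ) - 1) * Lam / lam - 1) with hα
  have hα1 : 1 ≤ α := le_max_left _ _
  have hα2 : ((n : ℝ) - 1) * Lam ≤ (α + 1) * lam := by
    have : ((n : ℝ) - 1) * Lam / lam - 1 ≤ α := le_max_right _ _
    rw [← div_le_iff₀ hlam]; linarith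
  have hM1 : 1 ≤ (36 * (n : ℝ)) ^ α := Real.one_le_rpow (by linarith) (by linarith)
  set N := (36 * (n : ℝ)) ^ α with hN
  set q := Real.sqrt n with hq
  have hqq : q ^ 2 = n := Real.sq_sqrt hn0.le
  have hq0 : 0 < q := Real.sqrt_pos.2 hn0
  have hq1 : 1 ≤ q := by nlinarith
  clear_value q
  set r := 1 / (24 * q) with hr
  have hr0 : 0 < r := by positivity
  have hr1 : r ≤ 1 := by rw [hr, div_le_one (by positivity)]; linarith
  -- norm of the contact point
  have hxs2 : ‖xs‖ ^ 2 ≤ 9 / 4 * n := by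
    rw [EuclideanSpace.real_norm_sq_eq]
    have : ∀ i ∈ Finset.univ, xs i ^ 2 ≤ (9 / 4 : ℝ) := by
      intro i _
      have h := hxs i
      simp only [PiLp.zero_apply, sub_zero] at h
      have := abs_lt.1 h
      nlinarith [this.1, this.2]
    have h := Finset.sum_le_sum this
    simp only [Finset.sum_const, Finset.card_univ, Fintype.card_fin, nsmul_eq_mul] at h
    linarith
  have hxsn : ‖xs‖ ≤ 3 / 2 * q := by
    refine (sq_le_sq₀ (norm_nonneg _) (by positivity)).1 ?_
    nlinarith
  -- lower bound on the ball
  have hlow : ∀ x : Euc n, ‖x‖ ≤ 2 * q → 15 / 64 ≤ v x - L x + 1 := by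
    intro x hx
    have h := htouch x (hB (by simpa using hx))
    have h1 : ‖x - xs‖ ≤ 7 / 2 * q := (norm_sub_le _ _).trans (by linarith)
    have h2 : ‖x - xs‖ ^ 2 ≤ 49 / 4 * n := by
      have := pow_le_pow_left₀ (norm_nonneg _) h1 2
      nlinarith
    have h3 : 1 / (16 * n) * ‖x - xs‖ ^ 2 ≤ 49 / 64 := by
      rw [one_div_mul_eq_div, div_le_iff₀ (by positivity)]
      linarith
    linarith
  -- cube geometry
  have hcube1 : closedBall (0 : Euc n) r ⊆ closure (cube (1 / (12 * q)) 0) := by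
    rw [← closure_ball _ hr0.ne']
    apply closure_mono
    intro y hy i
    have h1 : ‖y‖ < r := by simpa using hy
    have h2 := PiLp.norm_apply_le y i
    rw [Real.norm_eq_abs] at h2
    have h3 : 1 / (12 * q) / 2 = r := by rw [hr]; field_simp; norm_num
    rw [h3]
    simpa using h2.trans_lt h1
  have hcube2 : closure (cube (1 / (12 * q)) 0) ⊆ closedBall (0 : Euc n) (2 * q) := by
    apply closure_minimal _ isClosed_closedBall
    intro y hy
    rw [mem_closedBall_zero_iff]
    refine (sq_le_sq₀ (norm_nonneg _) (by positivity)).1 ?_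
    rw [EuclideanSpace.real_norm_sq_eq]
    have : ∀ i ∈ Finset.univ, y i ^ 2 ≤ (1 : ℝ) := by
      intro i _
      have h := hy i
      have h3 : 1 / (12 * q) / 2 = r := by rw [hr]; field_simp; norm_num
      rw [h3] at h
      simp only [PiLp.zero_apply, sub_zero] at h
      have := abs_lt.1 h
      nlinarith [this.1, this.2]
    have h := Finset.sum_le_sum this
    simp only [Finset.sum_const, Finset.card_univ, Fintype.card_fin, nsmul_eq_mul] at h
    nlinarith
  by_contra hcon
  push Not at hcon
  have hbig : ∀ x : Euc n, ‖x‖ ≤ r → 8 * N < v x - L x + 1 := by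
    intro x hx
    refine lt_of_lt_of_le hcon (csInf_le ⟨15 / 64, ?_⟩ ⟨x, hcube1 (by simpa using hx), rfl⟩)
    rintro _ ⟨y, hy, rfl⟩
    exact hlow y (by simpa using hcube2 hy)
  have hxsr : r < ‖xs‖ := by
    by_contra h
    have := hbig xs (not_lt.1 h)
    rw [heq] at this
    linarith
  -- barrier
  set S : ℝ := 9 / 4 * n with hS
  have hS0 : 0 < S := by positivity
  set β := α / 2 with hβ
  have hβ0 : 0 < β := by positivity
  set c := 4 * S ^ β with hc
  have hc0 : 0 < c := by positivity
  set e := 1 / (32 * (n : ℝ)) with he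
  have he0 : 0 < e := by positivity
  have hen : e * (4 * n) = 1 / 8 := by rw [he]; field_simp; norm_num
  have hcs : ∀ t : ℝ, 0 < t → c * t ^ (-β) = 4 * (S / t) ^ β := by
    intro t ht
    rw [hc, Real.div_rpow hS0.le ht.le, Real.rpow_neg ht.le]; ring
  have hin : c * (r ^ 2) ^ (-β) = 4 * N := by
    rw [hcs _ (by positivity)]
    have : S / r ^ 2 = (36 * n) ^ (2:ℝ) := by
      rw [hS, hr, div_pow, mul_pow, hqq, Real.rpow_two]; field_simp; norm_num
    rw [this, ← Real.rpow_mul (by positivity), hN]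
    congr 2
    rw [hβ]; ring
  have hout : c * (4 * (n:ℝ)) ^ (-β) ≤ 3 := by
    rw [hcs _ (by positivity)]
    have : S / (4 * n) = (3 / 4 : ℝ) ^ (2:ℝ) := by
      rw [hS]; norm_num; field_simp; norm_num
    rw [this, ← Real.rpow_mul (by positivity), show 2 * β = α by rw [hβ]; ring]
    have := Real.rpow_le_rpow_of_exponent_ge (x := (3/4:ℝ)) (by norm_num) (by norm_num) hα1
    rw [Real.rpow_one] at this
    linarith
  have hmid : 4 ≤ c * (‖xs‖ ^ 2) ^ (-β) := by
    have hp : 0 < ‖xs‖ ^ 2 := by have := hr0.trans hxsr; positivity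
    rw [hcs _ hp]
    have : 1 ≤ (S / ‖xs‖ ^ 2) ^ β :=
      Real.one_le_rpow (by rw [le_div_iff₀ hp]; linarith) hβ0.le
    linarith
  set k := c * (4 * (n:ℝ)) ^ (-β) with hk
  have hk0 : 0 < k := by positivity
  -- total test function
  set F : Euc n → ℝ := fun y => c * (‖y‖ ^ 2) ^ (-β) + e * ‖y‖ ^ 2 + ⟪p, y⟫_ℝ + b with hF
  have hFc : ContDiffOn ℝ 2 F {y | y ≠ 0} := by
    intro y hy
    apply ContDiffAt.contDiffWithinAt
    have h1 : ContDiffAt ℝ 2 (fun y : Euc n => ‖y‖ ^ 2) y := (contDiff_norm_sq ℝ).contDiffAt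
    have h2 : ContDiffAt ℝ 2 (fun y : Euc n => ⟪p, y⟫_ℝ) y :=
      (innerSL ℝ p).contDiff.contDiffAt
    have hne : ‖y‖ ^ 2 ≠ 0 := by simpa using hy
    exact (((contDiffAt_const.mul (h1.rpow_const_of_ne hne)).add (contDiffAt_const.mul h1)).add
      h2).add contDiffAt_const
  set K : Set (Euc n) := closedBall 0 (2 * q) ∩ {y | r ≤ ‖y‖} with hK
  have hKc : IsCompact K :=
    (isCompact_closedBall _ _).inter_right (isClosed_le continuous_const continuous_norm)
  have hK0 : ∀ y ∈ K, y ≠ 0 := by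
    rintro y ⟨-, hy⟩ rfl
    simp only [Set.mem_ofPred_eq, norm_zero] at hy
    linarith
  have hcont : ContinuousOn (fun x => v x - F x) K :=
    (hv.mono fun y hy => hB hy.1).sub (hFc.continuousOn.mono hK0)
  have hxsK : xs ∈ K := ⟨by rw [mem_closedBall_zero_iff]; linarith, hxsr.le⟩
  obtain ⟨x0, hx0, hmin⟩ := hKc.exists_isMinOn ⟨xs, hxsK⟩ hcont
  have hval : v x0 - F x0 ≤ v xs - F xs := hmin hxsK
  have hFL : ∀ y, F y = c * (‖y‖ ^ 2) ^ (-β) + e * ‖y‖ ^ 2 + L y := by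
    intro y; rw [hL]; simp only [hF]; ring
  rw [hFL, hFL, heq] at hval
  have hexs : 0 ≤ e * ‖xs‖ ^ 2 := by positivity
  have hx0r : r < ‖x0‖ := by
    refine lt_of_le_of_ne hx0.2 fun h => ?_
    have h1 := hbig x0 h.ge
    rw [← h, hin] at hval
    have : e * r ^ 2 ≤ 1 / 8 := by
      rw [← hen]; gcongr; nlinarith
    linarith
  have hx0R : ‖x0‖ < 2 * q := by
    have hle : ‖x0‖ ≤ 2 * q := by simpa using hx0.1
    refine lt_of_le_of_ne hle fun h => ?_
    have h1 := hlow x0 hle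
    have h2 : ‖x0‖ ^ 2 = 4 * n := by rw [h, mul_pow, hqq]; norm_num
    rw [h2, hen] at hval
    linarith
  have hx00 := hK0 x0 hx0
  have hloc : IsLocalMinOn (fun x => v x - F x) Ω x0 := by
    have : ∀ᶠ y in nhds x0, y ∈ K := by
      have o : IsOpen ({y : Euc n | ‖y‖ < 2 * q} ∩ {y | r < ‖y‖}) :=
        (isOpen_lt continuous_norm continuous_const).inter
          (isOpen_lt continuous_const continuous_norm)
      filter_upwards [o.mem_nhds ⟨hx0R, hx0r⟩] with y hy
      have hy2 : r < ‖y‖ := hy.2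
      exact ⟨by simpa using hy.1.le, show r ≤ ‖y‖ from hy2.le⟩
    exact Filter.Eventually.filter_mono nhdsWithin_le_nhds (this.mono fun y hy => hmin hy)
  have h1 := hsuper x0 (hB hx0.1) F ⟨_, isOpen_ne, hx00, hFc⟩ hloc
  have h2 := aux_pucci lam Lam hlam hLam hn c β e b hc0 hβ0 he0
    (by rw [hβ]; linarith) p x0 hx00
  linarith
end
end

section
/- Let n ≥ 2 be an integer and 0 < λ ≤ Λ real constants, and set M₁ := 8·(36n)^{max{1, (n−1)Λ/λ − 1}} and M₂ := 432·n·M₁. Let Ω ⊆ ℝⁿ be an open set containing the closed ball of radius 2√n centered at 0, and let v : Ω → ℝ be a continuous viscosity supersolution of M⁻_{λ,Λ}(D²v) ≤ 0 in Ω. If G⁻_{1/(8n)}(v,Ω) ∩ Q₃ ≠ ∅, then G⁻_{M₂}(v,Ω) ∩ Q_{1/(4√n)} ≠ ∅. -/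
open MeasureTheory Metric
open scoped InnerProductSpace ENNReal

noncomputable section

lemma trace_quad_le {n : ℕ} (B : Matrix (Fin n) (Fin n) ℝ) (hB : B.PosSemidef) (x : Fin n → ℝ) :
    x ⬝ᵥ (B.mulVec x) ≤ B.trace * (x ⬝ᵥ x) := by
  open scoped MatrixOrder in
  obtain ⟨C, rfl⟩ := CStarAlgebra.nonneg_iff_eq_star_mul_self.1 hB.nonneg
  rw [Matrix.star_eq_conjTranspose, Matrix.conjTranspose_eq_transpose_of_trivial, ← Matrix.mulVec_mulVec, Matrix.dotProduct_mulVec,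
    Matrix.vecMul_transpose]
  have h1 : (C.transpose * C).trace = ∑ k, ∑ i, C k i ^ 2 := by
    simp only [Matrix.trace, Matrix.diag, Matrix.mul_apply, Matrix.transpose_apply]
    rw [Finset.sum_comm]
    simp [sq]
  rw [h1, Finset.sum_mul]
  simp only [dotProduct]
  apply Finset.sum_le_sum
  intro k _
  have := Finset.sum_mul_sq_le_sq_mul_sq Finset.univ (fun i => C k i) x
  simp only [Matrix.mulVec, dotProduct]
  simpa [sq] using this

lemma trace_one_sub {n : ℕ} (x : Fin n → ℝ) (A : Matrix (Fin n) (Fin n) ℝ) (c : ℝ) :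
    x ⬝ᵥ ((c • (1 : Matrix (Fin n) (Fin n) ℝ) - A).mulVec x) = c * (x ⬝ᵥ x) - x ⬝ᵥ A.mulVec x := by
  rw [Matrix.sub_mulVec, Matrix.smul_mulVec, Matrix.one_mulVec, dotProduct_sub, dotProduct_smul,
    smul_eq_mul]

lemma pucci_pos_s8 {n : ℕ} (hn : 2 ≤ n) (lam Lam : ℝ) (hlam : 0 < lam) (hLam : lam ≤ Lam)
    (x : Fin n → ℝ) (hx : 0 < x ⬝ᵥ x) (q ε k : ℝ) (hk : 0 ≤ k) (hε : 0 < ε)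
    (hq : ((n : ℝ) - 1) * Lam / lam - 1 ≤ q) (hq1 : 1 ≤ q) :
    0 < pucciInf lam Lam ((2 * ε - k * (x ⬝ᵥ x)) • (1 : Matrix (Fin n) (Fin n) ℝ)
      + (k * (q + 2)) • Matrix.vecMulVec x x) := by
  have hn' : (2 : ℝ) ≤ n := by exact_mod_cast hn
  have hpos : 0 < 2 * ε * (n * lam) := by positivity
  refine lt_of_lt_of_le hpos ?_
  unfold pucciInf
  apply le_csInf
  · refine ⟨_, lam • 1, ?_, ?_, ?_, rfl⟩
    · simp [Matrix.IsSymm]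
    · unfold matLE; rw [sub_self]; exact Matrix.PosSemidef.zero
    · unfold matLE; rw [← sub_smul]; exact Matrix.PosSemidef.one.smul (sub_nonneg.2 hLam)
  · rintro t ⟨A, hs, h1, h2, rfl⟩
    have e : (A * ((2 * ε - k * (x ⬝ᵥ x)) • (1 : Matrix (Fin n) (Fin n) ℝ)
      + (k * (q + 2)) • Matrix.vecMulVec x x)).trace
      = (2 * ε - k * (x ⬝ᵥ x)) * A.trace + k * (q + 2) * (x ⬝ᵥ A.mulVec x) := by
      rw [mul_add, Matrix.mul_smul, Matrix.mul_smul, mul_one, Matrix.trace_add, Matrix.trace_smul,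
        Matrix.trace_smul, Matrix.mul_vecMulVec, Matrix.trace_vecMulVec, dotProduct_comm (A.mulVec x)]
      simp
    rw [e]
    have a1 : lam * (x ⬝ᵥ x) ≤ x ⬝ᵥ A.mulVec x := by
      have := h1.dotProduct_mulVec_nonneg x
      simp only [star_trivial] at this
      rw [← neg_sub, Matrix.neg_mulVec, dotProduct_neg, trace_one_sub] at this
      linarith
    have a2 := trace_quad_le _ h2 x
    rw [trace_one_sub, Matrix.trace_sub, Matrix.trace_smul, Matrix.trace_one, smul_eq_mul,
      Fintype.card_fin] at a2
    have a3 : n * lam ≤ A.trace := by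
      have := h1.trace_nonneg
      rw [Matrix.trace_sub, Matrix.trace_smul, Matrix.trace_one, smul_eq_mul,
      Fintype.card_fin] at this
      linarith
    have hq2 : ((n : ℝ) - 1) * Lam ≤ (q + 1) * lam := by
      have : ((n : ℝ) - 1) * Lam / lam ≤ q + 1 := by linarith
      rwa [div_le_iff₀ hlam] at this
    set N := x ⬝ᵥ x
    set S := x ⬝ᵥ A.mulVec x
    set T := A.trace
    have a4 : 0 ≤ -(N * T) + (q + 2) * S := by
      have : (q + 1) * (lam * N) ≤ (q + 1) * S := by gcongr
      have : ((n : ℝ) - 1) * Lam * N ≤ (q + 1) * lam * N := by gcongr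
      nlinarith
    have a5 := mul_nonneg hk a4
    have a6 : 2 * ε * (n * lam) ≤ 2 * ε * T := by gcongr
    nlinarith

def barrier {n : ℕ} (c s ε : ℝ) (p : Euc n) (d : ℝ) (x : Euc n) : ℝ :=
  c * (‖x‖ ^ 2) ^ s + ε * ‖x‖ ^ 2 + ⟪p, x⟫_ℝ + d

lemma hasFDerivAt_nsq {n : ℕ} (x : Euc n) :
    HasFDerivAt (fun y : Euc n => ‖y‖ ^ 2) ((2 : ℝ) • innerSL ℝ x) x := by
  have := (hasStrictFDerivAt_norm_sq x).hasFDerivAt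
  refine this.congr_fderiv ?_
  ext; simp

lemma hasFDerivAt_nsq_rpow {n : ℕ} (s : ℝ) (x : Euc n) (hx : x ≠ 0) :
    HasFDerivAt (fun y : Euc n => (‖y‖ ^ 2) ^ s) ((2 * s * (‖x‖ ^ 2) ^ (s - 1)) • innerSL ℝ x) x := by
  have hx' : ‖x‖ ^ 2 ≠ 0 := by simpa using hx
  have := (Real.hasDerivAt_rpow_const (x := ‖x‖ ^ 2) (p := s) (Or.inl hx')).comp_hasFDerivAt x
    (hasFDerivAt_nsq x)
  refine this.congr_fderiv ?_
  rw [smul_smul]; congr 1; ring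

lemma barrier_fderiv {n : ℕ} (c s ε : ℝ) (p : Euc n) (d : ℝ) (x : Euc n) (hx : x ≠ 0) :
    HasFDerivAt (barrier c s ε p d)
      ((c * (2 * s) * (‖x‖ ^ 2) ^ (s - 1) + 2 * ε) • innerSL ℝ x + innerSL ℝ p) x := by
  have := ((((hasFDerivAt_nsq_rpow s x hx).const_mul c).add ((hasFDerivAt_nsq x).const_mul ε)).add
    (innerSL ℝ p).hasFDerivAt).add_const d
  refine this.congr_fderiv ?_
  ext; simp; ring

lemma barrier_hess {n : ℕ} (c s ε : ℝ) (p : Euc n) (d : ℝ) (x : Euc n) (hx : x ≠ 0) :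
    hessianMatrix (barrier c s ε p d) x =
      (c * (2 * s) * (‖x‖ ^ 2) ^ (s - 1) + 2 * ε) • (1 : Matrix (Fin n) (Fin n) ℝ)
      + (c * (2 * s) * (2 * (s - 1)) * (‖x‖ ^ 2) ^ (s - 1 - 1)) • Matrix.vecMulVec x x := by
  have e : fderiv ℝ (barrier c s ε p d) =ᶠ[nhds x] fun x =>
      (c * (2 * s) * (‖x‖ ^ 2) ^ (s - 1) + 2 * ε) • innerSL ℝ x + innerSL ℝ p := by
    filter_upwards [isOpen_ne.mem_nhds hx] with y hy
    exact (barrier_fderiv c s ε p d y hy).fderiv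
  have h2 := (((((hasFDerivAt_nsq_rpow (s - 1) x hx).const_mul (c * (2 * s))).add_const (2 * ε)).smul
    (innerSL ℝ (E := Euc n)).hasFDerivAt).add_const (innerSL ℝ p)).fderiv
  ext i j
  unfold hessianMatrix
  rw [Matrix.of_apply, iteratedFDeriv_two_apply, e.fderiv_eq]
  erw [h2]
  simp [Matrix.vecMulVec_apply, Matrix.one_apply, EuclideanSpace.inner_single_right]
  erw [innerSL_apply_apply, innerSL_apply_apply]
  simp only [EuclideanSpace.inner_single_right, PiLp.single_apply]
  by_cases hij : i = j
  · subst hij; simp; ring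
  · have hji : ¬ j = i := fun h => hij h.symm
    simp [hij, hji]; ring

lemma barrier_contDiff {n : ℕ} (c s ε : ℝ) (p : Euc n) (d : ℝ) :
    ContDiffOn ℝ 2 (barrier c s ε p d) {x | x ≠ 0} := by
  unfold barrier
  have h1 : ContDiffOn ℝ 2 (fun x : Euc n => ‖x‖ ^ 2) {x | x ≠ 0} :=
    (contDiff_norm_sq ℝ).contDiffOn
  have h2 : ContDiffOn ℝ 2 (fun x : Euc n => (‖x‖ ^ 2) ^ s) {x | x ≠ 0} :=
    h1.rpow_const_of_ne (fun x hx => by simpa using hx)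
  have h3 : ContDiffOn ℝ 2 (fun x : Euc n => ⟪p, x⟫_ℝ) {x | x ≠ 0} :=
    (contDiff_const.inner ℝ contDiff_id).contDiffOn
  exact (((contDiffOn_const.mul h2).add (contDiffOn_const.mul h1)).add h3).add contDiffOn_const

lemma no_touch_s8 {n : ℕ} (hn : 2 ≤ n) (lam Lam : ℝ) (hlam : 0 < lam) (hLam : lam ≤ Lam)
    (Ω : Set (Euc n)) (v : Euc n → ℝ) (hsuper : ViscSupersol lam Lam Ω v)
    (c q ε : ℝ) (hc : 0 ≤ c) (hε : 0 < ε) (hq : ((n : ℝ) - 1) * Lam / lam - 1 ≤ q) (hq1 : 1 ≤ q)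
    (p : Euc n) (d : ℝ) (x : Euc n) (hx : x ≠ 0) (hxΩ : x ∈ Ω)
    (hmin : IsLocalMinOn (fun y => v y - barrier c (-q / 2) ε p d y) Ω x) : False := by
  have h := hsuper x hxΩ _ ⟨{x | x ≠ 0}, isOpen_ne, hx, barrier_contDiff c (-q / 2) ε p d⟩ hmin
  have hN : (x : Fin n → ℝ) ⬝ᵥ x = ‖x‖ ^ 2 := by
    rw [EuclideanSpace.real_norm_sq_eq]; simp [dotProduct, sq]
  have hNpos : 0 < ‖x‖ ^ 2 := by positivity
  have h' := pucci_pos_s8 hn lam Lam hlam hLam x (by rw [hN]; exact hNpos) q ε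
    (c * q * (‖x‖ ^ 2) ^ (-q / 2 - 1 - 1)) (by positivity) hε hq hq1
  rw [barrier_hess _ _ _ _ _ _ hx] at h
  rw [hN] at h'
  have e : (‖x‖ ^ 2) ^ (-q / 2 - 1) = (‖x‖ ^ 2) ^ (-q / 2 - 1 - 1) * ‖x‖ ^ 2 := by
    rw [Real.rpow_sub_one hNpos.ne' (-q / 2 - 1)]; field_simp
  rw [e] at h
  refine absurd h (not_le.2 ?_)
  refine h'.trans_eq ?_
  congr 3 <;> ring

lemma exists_small {n : ℕ} (hn : 2 ≤ n) (lam Lam : ℝ) (hlam : 0 < lam) (hLam : lam ≤ Lam)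
    (Ω : Set (Euc n)) (hB : closedBall 0 (2 * Real.sqrt n) ⊆ Ω)
    (v : Euc n → ℝ) (hv : ContinuousOn v Ω) (hsuper : ViscSupersol lam Lam Ω v)
    (q : ℝ) (hq : ((n : ℝ) - 1) * Lam / lam - 1 ≤ q) (hq1 : 1 ≤ q)
    (xb p : Euc n) (hxb : ‖xb‖ < 3 / 2 * Real.sqrt n)
    (hp : ∀ x ∈ Ω, v x ≥ v xb + ⟪p, x - xb⟫_ℝ - (1 / (8 * n) : ℝ) / 2 * ‖x - xb‖ ^ 2) :
    ∃ x : Euc n, ‖x‖ ≤ 1 / (18 * Real.sqrt n) ∧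
      v x - v xb - ⟪p, x - xb⟫_ℝ ≤ 3 * (36 * (n : ℝ)) ^ q := by
  by_contra! hcon
  have hn' : (2 : ℝ) ≤ n := by exact_mod_cast hn
  set R := Real.sqrt n with hR
  have hR2 : R ^ 2 = n := Real.sq_sqrt (by positivity)
  have hRpos : 0 < R := Real.sqrt_pos.2 (by positivity)
  have hR1 : 1 ≤ R := by nlinarith
  set r := 1 / (18 * R) with hr
  have hrpos : 0 < r := by positivity
  have hr1 : r < 1 := by
    rw [hr, div_lt_one (by positivity)]; linarith
  set c := 3 * (2 * R) ^ q with hc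
  have hf : ∀ t : ℝ, 0 < t → c * (t ^ 2) ^ (-q / 2) = 3 * (2 * R / t) ^ q := by
    intro t ht
    rw [← Real.rpow_natCast, ← Real.rpow_mul ht.le, Real.div_rpow (by positivity) ht.le]
    rw [show ((2 : ℕ) : ℝ) * (-q / 2) = -q by push_cast; ring, Real.rpow_neg ht.le, hc]
    ring
  have hxbr : r < ‖xb‖ := by
    by_contra! h
    have := hcon xb h
    simp at this
    have h2 : 0 < 3 * (36 * (n : ℝ)) ^ q := by positivity
    linarith
  set ε : ℝ := 1 / (100 * n) with hε
  have hεpos : 0 < ε := by positivity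
  have hεn : 4 * n * ε = 1 / 25 := by rw [hε]; field_simp; norm_num
  set d := -3 - 49 / 64 - 4 * n * ε + v xb - ⟪p, xb⟫_ℝ with hd
  have key : ∀ x, v x - barrier c (-q / 2) ε p d x = (v x - v xb - ⟪p, x - xb⟫_ℝ)
      - (c * (‖x‖ ^ 2) ^ (-q / 2) + ε * ‖x‖ ^ 2 - 3 - 49 / 64 - 4 * n * ε) := by
    intro x
    rw [barrier, hd, inner_sub_right]; ring
  set K : Set (Euc n) := closedBall 0 (2 * R) \ ball 0 r with hK
  have hKc : IsCompact K := (isCompact_closedBall _ _).diff isOpen_ball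
  have hK0 : ∀ x ∈ K, x ≠ 0 := by
    rintro x ⟨_, h⟩ rfl
    exact h (by simpa using hrpos)
  have hKΩ : K ⊆ Ω := fun x hx => hB hx.1
  have hcont : ContinuousOn (fun y => v y - barrier c (-q / 2) ε p d y) K :=
    (hv.mono hKΩ).sub ((barrier_contDiff c (-q / 2) ε p d).continuousOn.mono hK0)
  have hxbK : xb ∈ K := by
    refine ⟨by simp; linarith, by simp; linarith⟩
  obtain ⟨x0, hx0, hmin⟩ := hKc.exists_isMinOn ⟨xb, hxbK⟩ hcont
  have hneg : v x0 - barrier c (-q / 2) ε p d x0 < 0 := by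
    refine lt_of_le_of_lt (hmin hxbK) ?_
    show v xb - barrier c (-q / 2) ε p d xb < 0
    rw [key, hf _ (hrpos.trans hxbr)]
    have h1 : (4 / 3 : ℝ) ≤ (2 * R / ‖xb‖) ^ q := by
      have h0 : (4 / 3 : ℝ) ≤ 2 * R / ‖xb‖ := by
        rw [le_div_iff₀ (hrpos.trans hxbr)]; linarith
      exact h0.trans (Real.self_le_rpow_of_one_le (by linarith) hq1)
    have h2 : 0 ≤ ε * ‖xb‖ ^ 2 := by positivity
    simp only [sub_self, inner_zero_right]
    linarith
  have hx0pos : 0 < ‖x0‖ := norm_pos_iff.2 (hK0 x0 hx0)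
  have hle : ‖x0‖ ≤ 2 * R := by simpa using hx0.1
  have hge : r ≤ ‖x0‖ := by simpa using hx0.2
  have hεx : ε * ‖x0‖ ^ 2 ≤ 4 * n * ε := by
    have : ‖x0‖ ^ 2 ≤ (2 * R) ^ 2 := by gcongr
    nlinarith
  have hlt : ‖x0‖ < 2 * R := by
    refine lt_of_le_of_ne hle fun h => ?_
    rw [key, hf _ hx0pos, h, div_self (by positivity), Real.one_rpow] at hneg
    have h1 := hp x0 (hKΩ hx0)
    have h2 : ‖x0 - xb‖ ≤ 7 / 2 * R := by
      have := norm_sub_le x0 xb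
      linarith
    have h3 : (1 / (8 * n) : ℝ) / 2 * ‖x0 - xb‖ ^ 2 ≤ (1 / (8 * n) : ℝ) / 2 * (7 / 2 * R) ^ 2 := by
      gcongr
    have h4 : (1 / (8 * n) : ℝ) / 2 * (7 / 2 * R) ^ 2 = 49 / 64 := by
      rw [mul_pow, hR2]; field_simp; norm_num
    rw [h] at hεx
    linarith
  have hgt : r < ‖x0‖ := by
    refine lt_of_le_of_ne hge fun h => ?_
    rw [key, hf _ hx0pos, ← h] at hneg
    have h1 := hcon x0 h.ge
    have h2 : 2 * R / r = 36 * n := by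
      rw [hr, ← hR2]; field_simp; norm_num
    rw [h2] at hneg
    rw [← h] at hεx
    linarith
  refine no_touch_s8 hn lam Lam hlam hLam Ω v hsuper c q ε (by positivity) hεpos hq hq1 p d x0
    (hK0 x0 hx0) (hKΩ hx0) ?_
  have hKn : K ∈ nhds x0 := by
    have : ball (0 : Euc n) (2 * R) \ closedBall 0 r ∈ nhds x0 :=
      (isOpen_ball.sdiff isClosed_closedBall).mem_nhds ⟨by simpa using hlt, by simpa using hgt⟩
    exact Filter.mem_of_superset this (Set.sdiff_subset_sdiff ball_subset_closedBall ball_subset_closedBall)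
  exact (hmin.isLocalMin hKn).on Ω

/-- localization lemma, part (ii): touching in Q₃ with opening 1/(8n)
implies touching in Q_{1/(4√n)} with opening M₂ = 432·n·M₁. -/
theorem stmt_8 (n : ℕ) (hn : 2 ≤ n) (lam Lam : ℝ) (hlam : 0 < lam) (hLam : lam ≤ Lam)
    (Ω : Set (Euc n)) (hΩ : IsOpen Ω) (hB : closedBall 0 (2 * Real.sqrt n) ⊆ Ω)
    (v : Euc n → ℝ) (hv : ContinuousOn v Ω) (hsuper : ViscSupersol lam Lam Ω v)
    (hne : (Gm (1 / (8 * n)) v Ω ∩ cube 3 0).Nonempty) :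
    (Gm (432 * (n : ℝ) * (8 * (36 * (n : ℝ)) ^ (max (1 : ℝ) (((n : ℝ) - 1) * Lam / lam - 1))))
        v Ω ∩ cube (1 / (4 * Real.sqrt n)) 0).Nonempty := by
  obtain ⟨xb, ⟨hxbΩ, p, hp⟩, hxbc⟩ := hne
  set q := max (1 : ℝ) (((n : ℝ) - 1) * Lam / lam - 1) with hqdef
  have hq1 : 1 ≤ q := le_max_left _ _
  have hq : ((n : ℝ) - 1) * Lam / lam - 1 ≤ q := le_max_right _ _
  have hn' : (2 : ℝ) ≤ n := by exact_mod_cast hn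
  have hR2 : Real.sqrt n ^ 2 = n := Real.sq_sqrt (by positivity)
  have hRpos : 0 < Real.sqrt n := Real.sqrt_pos.2 (by positivity)
  have hxb2 : ‖xb‖ ^ 2 < 9 / 4 * n := by
    rw [EuclideanSpace.real_norm_sq_eq]
    have : ∑ i, xb i ^ 2 < ∑ i : Fin n, (9 / 4 : ℝ) := by
      apply Finset.sum_lt_sum_of_nonempty
      · exact ⟨⟨0, by omega⟩, Finset.mem_univ _⟩
      · intro i _
        have := hxbc i
        simp only [PiLp.zero_apply, sub_zero] at this
        rw [abs_lt] at this
        nlinarith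
    simpa [mul_comm] using this
  have hxb : ‖xb‖ < 3 / 2 * Real.sqrt n := by
    apply lt_of_pow_lt_pow_left₀ 2 (by positivity)
    rw [mul_pow, hR2]; linarith
  obtain ⟨x1, hx1, hv1⟩ := exists_small hn lam Lam hlam hLam Ω hB v hv hsuper q hq hq1 xb p hxb hp
  set E := (36 * (n : ℝ)) ^ q with hE
  have hE1 : 1 ≤ E := Real.one_le_rpow (by linarith) (by linarith)
  set M := 432 * (n : ℝ) * (8 * E) with hM
  have hMpos : 0 < M := by positivity
  set R := Real.sqrt n with hR
  have hR1 : 1 ≤ R := by nlinarith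
  set w : Euc n → ℝ := fun x => v x - v xb - ⟪p, x - xb⟫_ℝ + M / 2 * ‖x‖ ^ 2 with hw
  have hwc : ContinuousOn w (closedBall 0 (2 * R)) := by
    have := hv.mono hB
    rw [hw]
    fun_prop
  have hx1b : x1 ∈ closedBall (0 : Euc n) (2 * R) := by
    simp only [mem_closedBall, dist_zero_right]
    refine hx1.trans ?_
    rw [div_le_iff₀ (by positivity)]; nlinarith
  obtain ⟨x2, hx2, hmin⟩ := (isCompact_closedBall (0 : Euc n) (2 * R)).exists_isMinOn ⟨x1, hx1b⟩ hwc
  have hw1 : w x1 ≤ 3 * E + M / 2 * (1 / (324 * n)) := by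
    have : ‖x1‖ ^ 2 ≤ (1 / (18 * R)) ^ 2 := by gcongr
    rw [div_pow, mul_pow, hR2] at this
    norm_num at this
    simp only [hw]
    have h3 : M / 2 * ‖x1‖ ^ 2 ≤ M / 2 * (1 / (324 * n)) := by
      gcongr
      simpa using this
    linarith
  have hw1' : w x1 ≤ 9 * E := by
    have : M / 2 * (1 / (324 * n)) = 16 / 3 * E := by rw [hM]; field_simp; norm_num
    linarith
  have hfar : ∀ x ∈ Ω, 1 / (8 * R) ≤ ‖x‖ → w x1 < w x := by
    intro x hx hxn
    have h1 := hp x hx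
    have h2 : ‖x - xb‖ ^ 2 ≤ 2 * ‖x‖ ^ 2 + 2 * ‖xb‖ ^ 2 := by
      have h0 := norm_sub_le x xb
      have : ‖x - xb‖ ^ 2 ≤ (‖x‖ + ‖xb‖) ^ 2 := by gcongr
      nlinarith [sq_nonneg (‖x‖ - ‖xb‖)]
    have h3 : (1 / (8 * R)) ^ 2 ≤ ‖x‖ ^ 2 := by gcongr
    rw [div_pow, mul_pow, hR2] at h3
    have h4 : (1 / (8 * n) : ℝ) / 2 * ‖x - xb‖ ^ 2 ≤
        (1 / (8 * n) : ℝ) / 2 * (2 * ‖x‖ ^ 2 + 2 * (9 / 4 * n)) := by gcongr; linarith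
    have h5 : (1 / (8 * n) : ℝ) / 2 * (2 * ‖x‖ ^ 2 + 2 * (9 / 4 * n)) =
        (1 / (8 * n) : ℝ) * ‖x‖ ^ 2 + 9 / 32 := by field_simp; ring
    have h6 : (1 / (8 * n) : ℝ) ≤ 1 := by rw [div_le_one (by positivity)]; linarith
    have h7 : (1 / (8 * n) : ℝ) ≤ M / 4 := by rw [hM]; nlinarith
    have h8 : (1 / (8 * n) : ℝ) * ‖x‖ ^ 2 ≤ M / 4 * ‖x‖ ^ 2 := by gcongr
    have h9 : M / 4 * (1 ^ 2 / (8 ^ 2 * n)) ≤ M / 4 * ‖x‖ ^ 2 := by gcongr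
    have h10 : M / 4 * (1 ^ 2 / (8 ^ 2 * n)) = 27 / 2 * E := by rw [hM]; field_simp; norm_num
    have h11 : w x ≥ 27 / 2 * E - 9 / 32 := by
      simp only [hw]
      linarith
    linarith
  have hx2n : ‖x2‖ < 1 / (8 * R) := by
    by_contra! h
    exact absurd (hmin hx1b) (not_le.2 (hfar x2 (hB hx2) h))
  have hglob : ∀ x ∈ Ω, w x2 ≤ w x := by
    intro x hx
    by_cases h : x ∈ closedBall (0 : Euc n) (2 * R)
    · exact hmin h
    · refine (hmin hx1b).trans (hfar x hx ?_).le
      simp only [mem_closedBall, dist_zero_right, not_le] at h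
      refine le_trans ?_ h.le
      rw [div_le_iff₀ (by positivity)]; nlinarith
  refine ⟨x2, ⟨hB hx2, p - M • x2, ?_⟩, ?_⟩
  · intro x hx
    have h := hglob x hx
    simp only [hw] at h
    rw [inner_sub_left, inner_smul_left, norm_sub_sq_real, inner_sub_right x2,
      real_inner_self_eq_norm_sq, inner_sub_right p]
    rw [inner_sub_right p, inner_sub_right p] at h
    have hcm := real_inner_comm x x2
    simp only [conj_trivial]
    rw [hcm]
    linarith
  · intro i
    have h1 : |x2 i| ≤ ‖x2‖ := PiLp.norm_apply_le x2 i
    have h2 : 1 / (4 * R) / 2 = 1 / (8 * R) := by field_simp; norm_num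
    simp only [PiLp.zero_apply, sub_zero]
    rw [h2]
    exact lt_of_le_of_lt h1 hx2n
end
end
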